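/- Uniformity principle in dimension k ≥ 2: Fix a dimension k ≥ 2, a demand-to-supply ratio β > 0, and a constant M ≥ max{1, 1/β}. There exist a constant C > 0 depending only on β, M, and k and an integer N such that for all n ≥ N with m = βn, and for all service-range vectors r, r' ∈ [0, M]^n satisfying r ⪰ r' and ‖r^↓ − r'^↓‖₁ > θn for some θ > C·n^{−1/(4(k+1))}, the expected maximum matching sizes satisfy μ_m(r') > μ_m(r). -/

import Mathlib

open MeasureTheory
open scoped Classical

noncomputable section

/-- A matching of a bipartite compatibility relation, given as a finite set of
supply-demand pairs with compatible endpoints and pairwise distinct coordinates. -/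
def IsBipMatching {a b : ℕ} (adj : Fin a → Fin b → Prop) (M : Finset (Fin a × Fin b)) : Prop :=
  (∀ e ∈ M, adj e.1 e.2) ∧
    ∀ e ∈ M, ∀ e' ∈ M, e ≠ e' → e.1 ≠ e'.1 ∧ e.2 ≠ e'.2

/-- The maximum cardinality of a matching of the bipartite compatibility relation. -/
def matchingNumber {a b : ℕ} (adj : Fin a → Fin b → Prop) : ℕ :=
  sSup {c | ∃ M : Finset (Fin a × Fin b), IsBipMatching adj M ∧ M.card = c}

/-- The uniform measure on the unit cube `[0,1]^k`. -/
def unifCube (k : ℕ) : Measure (EuclideanSpace ℝ (Fin k)) :=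
  volume.restrict {x | ∀ i, x i ∈ Set.Icc (0 : ℝ) 1}

/-- Compatibility: supply node `i` can serve demand node `j` iff the demand location is
within distance `(r i / n)^(1/k)` of the supply location. -/
def adjOf (k ntot : ℕ) {a b : ℕ} (S : Fin a → EuclideanSpace ℝ (Fin k)) (r : Fin a → ℝ)
    (D : Fin b → EuclideanSpace ℝ (Fin k)) (i : Fin a) (j : Fin b) : Prop :=
  dist (S i) (D j) ≤ (r i / (ntot : ℝ)) ^ ((1 : ℝ) / (k : ℝ))

/-- Expected maximum matching size, with supply and demand locations i.i.d. uniform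
on the unit cube `[0,1]^k`. -/
def muU (k ntot m : ℕ) {a : ℕ} (r : Fin a → ℝ) : ℝ :=
  ∫ S : Fin a → EuclideanSpace ℝ (Fin k),
    ∫ D : Fin m → EuclideanSpace ℝ (Fin k),
      (matchingNumber (fun i j => adjOf k ntot S r D i j) : ℝ)
        ∂(Measure.pi fun _ => unifCube k) ∂(Measure.pi fun _ => unifCube k)

/-- The non-increasing rearrangement of a finite real vector. -/
def descSort {n : ℕ} (x : Fin n → ℝ) : Fin n → ℝ :=
  x ∘ Tuple.sort (fun i => -x i)

/-- `x` majorizes `y`. -/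
def Majorizes {n : ℕ} (x y : Fin n → ℝ) : Prop :=
  (∀ ℓ : ℕ,
      ∑ i ∈ Finset.univ.filter (fun i : Fin n => (i : ℕ) < ℓ), descSort y i ≤
        ∑ i ∈ Finset.univ.filter (fun i : Fin n => (i : ℕ) < ℓ), descSort x i) ∧
    ∑ i, x i = ∑ i, y i


lemma IsBipMatching.subset' {a b : ℕ} {adj adj' : Fin a → Fin b → Prop} {M M' : Finset (Fin a × Fin b)}
    (h : IsBipMatching adj M) (hs : M' ⊆ M) (ha : ∀ e ∈ M', adj' e.1 e.2) : IsBipMatching adj' M' :=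
  ⟨ha, fun e he e' he' hne => h.2 e (hs he) e' (hs he') hne⟩

lemma mn_bdd {a b : ℕ} (adj : Fin a → Fin b → Prop) :
    BddAbove {c | ∃ M : Finset (Fin a × Fin b), IsBipMatching adj M ∧ M.card = c} := by
  refine ⟨Fintype.card (Fin a × Fin b), ?_⟩
  rintro c ⟨M, -, rfl⟩
  exact Finset.card_le_univ M

lemma mn_exists {a b : ℕ} (adj : Fin a → Fin b → Prop) :
    ∃ M : Finset (Fin a × Fin b), IsBipMatching adj M ∧ M.card = matchingNumber adj := by
  have := Nat.sSup_mem (s := {c | ∃ M : Finset (Fin a × Fin b), IsBipMatching adj M ∧ M.card = c})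
    ⟨0, ∅, by simp [IsBipMatching], by simp⟩ (mn_bdd adj)
  exact this

lemma le_mn {a b : ℕ} {adj : Fin a → Fin b → Prop} {M : Finset (Fin a × Fin b)}
    (h : IsBipMatching adj M) : M.card ≤ matchingNumber adj :=
  le_csSup (mn_bdd adj) ⟨M, h, rfl⟩

lemma mn_le {a b : ℕ} (adj : Fin a → Fin b → Prop) : matchingNumber adj ≤ a * b := by
  obtain ⟨M, -, h⟩ := mn_exists adj
  rw [← h]
  simpa using Finset.card_le_univ M

lemma mn_mono {a b : ℕ} {adj adj' : Fin a → Fin b → Prop} (h : ∀ i j, adj i j → adj' i j) :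
    matchingNumber adj ≤ matchingNumber adj' := by
  obtain ⟨M, hM, hc⟩ := mn_exists adj
  rw [← hc]
  exact le_mn (hM.subset' subset_rfl fun e he => h _ _ (hM.1 e he))

lemma mn_perm_le {a b : ℕ} (adj : Fin a → Fin b → Prop) (σ : Equiv.Perm (Fin a)) :
    matchingNumber adj ≤ matchingNumber (fun i j => adj (σ i) j) := by
  obtain ⟨M, hM, hc⟩ := mn_exists adj
  let f : Fin a × Fin b ↪ Fin a × Fin b := (Equiv.prodCongr σ.symm (Equiv.refl _)).toEmbedding
  rw [← hc, ← Finset.card_map f]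
  apply le_mn
  constructor
  · intro e he
    obtain ⟨e', he', rfl⟩ := Finset.mem_map.1 he
    simpa [f] using hM.1 e' he'
  · intro e he e' he' hne
    obtain ⟨x, hx, rfl⟩ := Finset.mem_map.1 he
    obtain ⟨y, hy, rfl⟩ := Finset.mem_map.1 he'
    have := hM.2 x hx y hy (fun h => hne (by rw [h]))
    simpa [f] using this

lemma mn_perm {a b : ℕ} (adj : Fin a → Fin b → Prop) (σ : Equiv.Perm (Fin a)) :
    matchingNumber (fun i j => adj (σ i) j) = matchingNumber adj := by
  apply le_antisymm _ (mn_perm_le adj σ)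
  simpa using mn_perm_le (fun i j => adj (σ i) j) σ.symm

/-- demand nodes which help when served by the extra supply `i` -/
def freeN {a b : ℕ} (adj : Fin a → Fin b → Prop) (i : Fin a) (j : Fin b) : Prop :=
  matchingNumber (Function.update adj i (fun _ => False)) <
    matchingNumber (Function.update adj i (fun j' => j' = j))

lemma mn_update {a b : ℕ} (adj : Fin a → Fin b → Prop) (i : Fin a) (A : Fin b → Prop) :
    matchingNumber (Function.update adj i A) =
      matchingNumber (Function.update adj i (fun _ => False)) +
        if ∃ j, freeN adj i j ∧ A j then 1 else 0 := by
  have hupper : matchingNumber (Function.update adj i A) ≤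
      matchingNumber (Function.update adj i (fun _ => False)) + 1 := by
    obtain ⟨M, hM, hc⟩ := mn_exists (Function.update adj i A)
    have h1 : IsBipMatching (Function.update adj i (fun _ => False)) (M.filter fun e => e.1 ≠ i) := by
      refine hM.subset' (Finset.filter_subset _ _) ?_
      intro e he
      obtain ⟨he, hne⟩ := Finset.mem_filter.1 he
      have := hM.1 e he
      rw [Function.update_of_ne hne] at this ⊢
      exact this
    have h2 : (M.filter fun e => ¬ (e.1 ≠ i)).card ≤ 1 := by
      rw [Finset.card_le_one]
      intro e he e' he'
      simp only [Finset.mem_filter, not_not] at he he'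
      by_contra hne
      exact (hM.2 e he.1 e' he'.1 hne).1 (he.2.trans he'.2.symm)
    have h3 := Finset.card_filter_add_card_filter_not (s := M) (fun e => e.1 ≠ i)
    have h4 := le_mn h1
    omega
  have hlower : matchingNumber (Function.update adj i (fun _ => False)) ≤
      matchingNumber (Function.update adj i A) := by
    apply mn_mono
    intro i' j h
    by_cases hi : i' = i
    · subst hi; simp at h
    · rw [Function.update_of_ne hi] at h ⊢; exact h
  split_ifs with hex
  · obtain ⟨j, hj, hA⟩ := hex
    have : matchingNumber (Function.update adj i (fun j' => j' = j)) ≤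
        matchingNumber (Function.update adj i A) := by
      apply mn_mono
      intro i' j' h
      by_cases hi : i' = i
      · subst hi; simp at h ⊢; rw [h]; exact hA
      · rw [Function.update_of_ne hi] at h ⊢; exact h
    unfold freeN at hj
    omega
  · by_contra hne
    apply hex
    obtain ⟨M, hM, hc⟩ := mn_exists (Function.update adj i A)
    have hexi : ∃ e ∈ M, e.1 = i := by
      by_contra hno
      push Not at hno
      have : IsBipMatching (Function.update adj i (fun _ => False)) M := by
        refine hM.subset' subset_rfl ?_
        intro e he
        have := hM.1 e he
        rw [Function.update_of_ne (hno e he)] at this ⊢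
        exact this
      have := le_mn this
      omega
    obtain ⟨e, he, hei⟩ := hexi
    refine ⟨e.2, ?_, ?_⟩
    · unfold freeN
      have : IsBipMatching (Function.update adj i (fun j' => j' = e.2)) M := by
        refine hM.subset' subset_rfl ?_
        intro e' he'
        by_cases hi : e'.1 = i
        · have : e' = e := by
            by_contra hne
            exact (hM.2 e' he' e he hne).1 (hi.trans hei.symm)
          rw [this, hei]; simp
        · have := hM.1 e' he'
          rw [Function.update_of_ne hi] at this ⊢
          exact this
      have := le_mn this
      omega
    · have := hM.1 e he
      rw [hei] at this
      simpa using this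

lemma freeN_of_isolated {a b : ℕ} (adj : Fin a → Fin b → Prop) (i : Fin a) (j : Fin b)
    (h : ∀ i', i' ≠ i → ¬ adj i' j) : freeN adj i j := by
  obtain ⟨M, hM, hc⟩ := mn_exists (Function.update adj i (fun _ => False))
  unfold freeN
  rw [← hc]
  have hi : ∀ e ∈ M, e.1 ≠ i := by
    intro e he hei
    have := hM.1 e he
    rw [hei] at this
    simp at this
  have hj : ∀ e ∈ M, e.2 ≠ j := by
    intro e he hej
    have := hM.1 e he
    rw [Function.update_of_ne (hi e he), hej] at this
    exact h _ (hi e he) this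
  have hnot : (i, j) ∉ M := fun hh => hi _ hh rfl
  have : IsBipMatching (Function.update adj i (fun j' => j' = j)) (insert (i, j) M) := by
    constructor
    · intro e he
      rcases Finset.mem_insert.1 he with rfl | he
      · simp
      · have := hM.1 e he
        rw [Function.update_of_ne (hi e he)] at this ⊢
        exact this
    · intro e he e' he' hne
      rcases Finset.mem_insert.1 he with rfl | he <;> rcases Finset.mem_insert.1 he' with rfl | he'
      · exact absurd rfl hne
      · exact ⟨(hi e' he').symm, (hj e' he').symm⟩
      · exact ⟨hi e he, hj e he⟩
      · exact hM.2 e he e' he' hne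
  have h2 := le_mn this
  rw [Finset.card_insert_of_notMem hnot] at h2
  omega

/-- `freeN` only depends on the other rows -/
lemma freeN_congr {a b : ℕ} {adj adj' : Fin a → Fin b → Prop} {i : Fin a}
    (h : ∀ A, Function.update adj i A = Function.update adj' i A) (j : Fin b) :
    freeN adj i j ↔ freeN adj' i j := by
  unfold freeN; rw [h, h]


lemma abel_ineq {n : ℕ} (x y γ : Fin n → ℝ) (hγ : Monotone γ)
    (hps : ∀ ℓ : ℕ, ∑ i ∈ Finset.univ.filter (fun i : Fin n => (i : ℕ) < ℓ), y i ≤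
        ∑ i ∈ Finset.univ.filter (fun i : Fin n => (i : ℕ) < ℓ), x i)
    (htot : ∑ i, x i = ∑ i, y i) : ∑ i, γ i * (x i - y i) ≤ 0 := by
  let d : ℕ → ℝ := fun i => if h : i < n then x ⟨i, h⟩ - y ⟨i, h⟩ else 0
  let f : ℕ → ℝ := fun i => if h : i < n then γ ⟨i, h⟩ else 0
  have e1 : ∑ i, γ i * (x i - y i) = ∑ i ∈ Finset.range n, f i • d i := by
    rw [← Fin.sum_univ_eq_sum_range (fun i => f i • d i)]
    apply Finset.sum_congr rfl
    intro i _
    simp [f, d]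
  have e2 : ∀ ℓ, ℓ ≤ n → ∑ i ∈ Finset.range ℓ, d i =
      ∑ i ∈ Finset.univ.filter (fun i : Fin n => (i : ℕ) < ℓ), (x i - y i) := by
    intro ℓ hℓ
    symm
    apply Finset.sum_bij (fun (i : Fin n) _ => (i : ℕ))
    · intro a ha; simpa using ha
    · intro a _ b _ h; exact Fin.ext h
    · intro b hb
      have hb := Finset.mem_range.1 hb
      exact ⟨⟨b, by omega⟩, by simpa using hb, rfl⟩
    · intro a _; simp [d]
  have hG : ∀ ℓ, ℓ ≤ n → 0 ≤ ∑ i ∈ Finset.range ℓ, d i := by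
    intro ℓ hℓ
    rw [e2 ℓ hℓ, Finset.sum_sub_distrib]
    linarith [hps ℓ]
  have hGn : ∑ i ∈ Finset.range n, d i = 0 := by
    rw [e2 n le_rfl, Finset.filter_true_of_mem (fun i _ => i.2), Finset.sum_sub_distrib, htot, sub_self]
  rw [e1, Finset.sum_range_by_parts, hGn]
  simp only [smul_eq_mul, mul_zero, zero_sub, Left.neg_nonpos_iff]
  apply Finset.sum_nonneg
  intro i hi
  have hi := Finset.mem_range.1 hi
  apply mul_nonneg _ (hG _ (by omega))
  simp only [f]
  rw [dif_pos (show i + 1 < n by omega), dif_pos (show i < n by omega), sub_nonneg]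
  exact hγ (by simp)

lemma descSort_antitone {n : ℕ} (x : Fin n → ℝ) : Antitone (descSort x) := by
  have := Tuple.monotone_sort (fun i => -x i)
  intro i j hij
  have := this hij
  simp only [Function.comp] at this
  simp only [descSort, Function.comp]
  linarith

lemma descSort_sum {n : ℕ} (x : Fin n → ℝ) (f : ℝ → ℝ) : ∑ i, f (descSort x i) = ∑ i, f (x i) :=
  Equiv.sum_comp (Tuple.sort (fun i => -x i)) (fun i => f (x i))

lemma strong_karamata {n : ℕ} {M c θ : ℝ} (hc : 0 ≤ c) (hθ : 0 ≤ θ) {r r' : Fin n → ℝ}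
    (hr : ∀ i, r i ∈ Set.Icc (0 : ℝ) M) (hr' : ∀ i, r' i ∈ Set.Icc (0 : ℝ) M)
    (hmaj : Majorizes r r') (hgap : θ * n ≤ ∑ i, |descSort r i - descSort r' i|)
    (φ g : ℝ → ℝ) (hg : AntitoneOn g (Set.Icc 0 M))
    (hφ : ∀ a ∈ Set.Icc 0 M, ∀ b ∈ Set.Icc 0 M, φ b ≤ φ a + g a * (b - a) - c * (b - a) ^ 2) :
    c * θ ^ 2 * n ≤ ∑ i, (φ (r' i) - φ (r i)) := by
  rw [Finset.sum_sub_distrib, ← descSort_sum r', ← descSort_sum r]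
  have hx : ∀ i, descSort r i ∈ Set.Icc (0 : ℝ) M := fun i => hr _
  have hy : ∀ i, descSort r' i ∈ Set.Icc (0 : ℝ) M := fun i => hr' _
  have h1 : ∑ i, g (descSort r' i) * (descSort r i - descSort r' i) ≤ 0 := by
    apply abel_ineq _ _ (fun i => g (descSort r' i))
    · intro i j hij
      exact hg (hy j) (hy i) (descSort_antitone r' hij)
    · exact hmaj.1
    · have := hmaj.2
      have e1 := descSort_sum r id
      have e2 := descSort_sum r' id
      simp only [id] at e1 e2
      rw [e1, e2, this]
  have h2 : ∑ i, φ (descSort r i) ≤ ∑ i, (φ (descSort r' i) +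
      g (descSort r' i) * (descSort r i - descSort r' i) - c * (descSort r i - descSort r' i) ^ 2) :=
    Finset.sum_le_sum fun i _ => hφ _ (hy i) _ (hx i)
  rw [Finset.sum_sub_distrib, Finset.sum_add_distrib, ← Finset.mul_sum] at h2
  have h3 : (∑ i, |descSort r i - descSort r' i|) ^ 2 ≤
      n * ∑ i, (descSort r i - descSort r' i) ^ 2 := by
    have := sq_sum_le_card_mul_sum_sq (s := (Finset.univ : Finset (Fin n)))
      (f := fun i => |descSort r i - descSort r' i|)
    simpa [sq_abs] using this
  have h4 : θ ^ 2 * n ≤ ∑ i, (descSort r i - descSort r' i) ^ 2 := by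
    rcases Nat.eq_zero_or_pos n with h0 | h0
    · subst h0; simp
    · have hn : (0 : ℝ) < n := by exact_mod_cast h0
      have : (θ * n) ^ 2 ≤ n * ∑ i, (descSort r i - descSort r' i) ^ 2 :=
        le_trans (pow_le_pow_left₀ (by positivity) hgap 2) h3
      nlinarith
  nlinarith [mul_le_mul_of_nonneg_left h4 hc]

lemma resample {n : ℕ} (i : Fin n) (f : (Fin n → Fin n) → ℝ) :
    ∑ I : Fin n → Fin n, ∑ l, f (Function.update I i l) = n * ∑ I : Fin n → Fin n, f I := by
  let e : (Fin n → Fin n) × Fin n → (Fin n → Fin n) × Fin n :=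
    fun p => (Function.update p.1 i p.2, p.1 i)
  have he : Function.Involutive e := by
    rintro ⟨I, l⟩
    simp [e]
  have h1 := Equiv.sum_comp (he.toPerm) (fun p : (Fin n → Fin n) × Fin n => f p.1)
  rw [← Finset.univ_product_univ, Finset.sum_product, Finset.sum_product] at h1
  simp only [Function.Involutive.coe_toPerm, e] at h1
  rw [h1]
  simp [Finset.mul_sum]

lemma var_bound {n : ℕ} (e : Fin n → ℝ) (h0 : ∑ i, e i = 0) (h1 : ∀ i, |e i| ≤ 1) :
    ∑ I : Fin n → Fin n, |∑ i, e (I i)| ≤ (n : ℝ) ^ n * √n := by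
  have hcov : ∀ i j : Fin n, ∑ I : Fin n → Fin n, e (I i) * e (I j) ≤
      if i = j then (n : ℝ) ^ n else 0 := by
    intro i j
    split_ifs with hij
    · subst hij
      calc ∑ I : Fin n → Fin n, e (I i) * e (I i) ≤ ∑ I : Fin n → Fin n, (1 : ℝ) := by
            apply Finset.sum_le_sum
            intro I _
            have := h1 (I i)
            nlinarith [abs_nonneg (e (I i)), abs_mul_abs_self (e (I i))]
        _ = (n : ℝ) ^ n := by simp
    · have hn : (0 : ℝ) < n := by exact_mod_cast i.pos
      have := resample i (fun I => e (I i) * e (I j))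
      have h2 : ∑ I : Fin n → Fin n, ∑ l, e (Function.update I i l i) * e (Function.update I i l j) = 0 := by
        apply Finset.sum_eq_zero
        intro I _
        simp only [Function.update_self, Function.update_of_ne (Ne.symm hij)]
        rw [← Finset.sum_mul, h0, zero_mul]
      rw [h2] at this
      have : ∑ I : Fin n → Fin n, e (I i) * e (I j) = 0 := by
        rcases mul_eq_zero.1 this.symm with h | h
        · exact absurd h hn.ne'
        · exact h
      exact this.le
  have hsq : ∑ I : Fin n → Fin n, (∑ i, e (I i)) ^ 2 ≤ (n : ℝ) ^ n * n := by
    calc ∑ I : Fin n → Fin n, (∑ i, e (I i)) ^ 2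
        = ∑ i, ∑ j, ∑ I : Fin n → Fin n, e (I i) * e (I j) := by
          simp_rw [sq, Finset.sum_mul_sum]
          rw [Finset.sum_comm]
          apply Finset.sum_congr rfl
          intro i _
          rw [Finset.sum_comm]
      _ ≤ ∑ i : Fin n, ∑ j : Fin n, if i = j then (n : ℝ) ^ n else 0 :=
          Finset.sum_le_sum fun i _ => Finset.sum_le_sum fun j _ => hcov i j
      _ = (n : ℝ) ^ n * n := by simp [mul_comm]
  have hcs := sq_sum_le_card_mul_sum_sq (s := (Finset.univ : Finset (Fin n → Fin n)))
      (f := fun I => |∑ i, e (I i)|)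
  simp only [sq_abs, Finset.card_univ, Fintype.card_fun, Fintype.card_fin, Nat.cast_pow] at hcs
  apply abs_le_of_sq_le_sq' _ (by positivity) |>.2
  rw [mul_pow, Real.sq_sqrt (by positivity)]
  calc _ ≤ _ := hcs
    _ ≤ (n : ℝ) ^ n * ((n : ℝ) ^ n * n) := by gcongr
    _ = _ := by ring

/-- number of coordinates exceeding `t` -/
def cntGt {n : ℕ} (x : Fin n → ℝ) (t : ℝ) : ℝ := ∑ i, if t < x i then (1 : ℝ) else 0

lemma stepF_intervalIntegrable (x a b : ℝ) :
    IntervalIntegrable (fun t => if t < x then (1 : ℝ) else 0) volume a b := by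
  apply Antitone.intervalIntegrable
  intro s t hst
  dsimp only
  split_ifs with h1 h2 h2 <;> norm_num
  linarith

lemma stepF_integral {x M : ℝ} (hx : x ∈ Set.Icc 0 M) :
    ∫ t in (0 : ℝ)..M, (if t < x then (1 : ℝ) else 0) = x := by
  rw [← intervalIntegral.integral_add_adjacent_intervals (stepF_intervalIntegrable x 0 x)
    (stepF_intervalIntegrable x x M)]
  have h1 : ∫ t in (0 : ℝ)..x, (if t < x then (1 : ℝ) else 0) = ∫ t in (0 : ℝ)..x, (1 : ℝ) := by
    apply intervalIntegral.integral_congr_ae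
    have : ∀ᵐ t : ℝ, t ≠ x := by simp [ae_iff, measure_singleton]
    filter_upwards [this] with t ht hmem
    rw [Set.uIoc_of_le hx.1] at hmem
    rw [if_pos (lt_of_le_of_ne hmem.2 ht)]
  have h2 : ∫ t in x..M, (if t < x then (1 : ℝ) else 0) = ∫ t in x..M, (0 : ℝ) := by
    apply intervalIntegral.integral_congr
    intro t ht
    rw [Set.uIcc_of_le hx.2] at ht
    simp [not_lt.2 ht.1]
  rw [h1, h2]; simp

lemma sorted_l1 {n : ℕ} {M : ℝ} (hM : 0 ≤ M) (x y : Fin n → ℝ)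
    (hx : ∀ i, x i ∈ Set.Icc (0 : ℝ) M) (hy : ∀ i, y i ∈ Set.Icc (0 : ℝ) M)
    (hxa : Antitone x) (hya : Antitone y) :
    ∑ i, |x i - y i| ≤ ∫ t in (0 : ℝ)..M, |cntGt x t - cntGt y t| := by
  have hi : ∀ i, IntervalIntegrable (fun t => |(if t < x i then (1 : ℝ) else 0) -
      (if t < y i then (1 : ℝ) else 0)|) volume 0 M := fun i =>
    ((stepF_intervalIntegrable _ _ _).sub (stepF_intervalIntegrable _ _ _)).abs
  calc ∑ i, |x i - y i| ≤ ∑ i, ∫ t in (0 : ℝ)..M, |(if t < x i then (1 : ℝ) else 0) -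
      (if t < y i then (1 : ℝ) else 0)| := by
        apply Finset.sum_le_sum
        intro i _
        have e : x i - y i = ∫ t in (0 : ℝ)..M, ((if t < x i then (1 : ℝ) else 0) -
            (if t < y i then (1 : ℝ) else 0)) := by
          rw [intervalIntegral.integral_sub (stepF_intervalIntegrable _ _ _)
            (stepF_intervalIntegrable _ _ _), stepF_integral (hx i), stepF_integral (hy i)]
        rw [e]
        exact intervalIntegral.abs_integral_le_integral_abs hM
    _ = ∫ t in (0 : ℝ)..M, ∑ i, |(if t < x i then (1 : ℝ) else 0) -
      (if t < y i then (1 : ℝ) else 0)| := by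
        rw [intervalIntegral.integral_finsetSum]
        intro i _; exact hi i
    _ = _ := by
        congr 1
        ext t
        unfold cntGt
        rw [← Finset.sum_sub_distrib]
        by_cases h : ∃ i, t < x i ∧ ¬ (t < y i)
        · obtain ⟨i, h1, h2⟩ := h
          have hnn : ∀ j, 0 ≤ (if t < x j then (1 : ℝ) else 0) - (if t < y j then (1 : ℝ) else 0) := by
            intro j
            rcases le_total j i with hji | hji
            · rw [if_pos (h1.trans_le (hxa hji))]
              split_ifs <;> norm_num
            · rw [if_neg (show ¬ t < y j from fun hh => h2 (hh.trans_le (hya hji)))]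
              split_ifs <;> norm_num
          rw [abs_of_nonneg (Finset.sum_nonneg fun j _ => hnn j)]
          exact Finset.sum_congr rfl fun j _ => abs_of_nonneg (hnn j)
        · have hnp : ∀ j, (if t < x j then (1 : ℝ) else 0) - (if t < y j then (1 : ℝ) else 0) ≤ 0 := by
            intro j
            by_cases h1 : t < x j
            · by_cases h2 : t < y j
              · simp [h1, h2]
              · exact absurd ⟨j, h1, h2⟩ h
            · rw [if_neg h1]; split_ifs <;> norm_num
          rw [abs_of_nonpos (Finset.sum_nonpos fun j _ => hnp j), ← Finset.sum_neg_distrib]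
          exact Finset.sum_congr rfl fun j _ => abs_of_nonpos (hnp j)

lemma cntGt_descSort {n : ℕ} (x : Fin n → ℝ) (t : ℝ) : cntGt (descSort x) t = cntGt x t :=
  descSort_sum x (fun s => if t < s then (1 : ℝ) else 0)

lemma cnt_sample {n : ℕ} (r : Fin n → ℝ) (t : ℝ) :
    ∑ I : Fin n → Fin n, |cntGt (r ∘ I) t - cntGt r t| ≤ (n : ℝ) ^ n * √n := by
  rcases Nat.eq_zero_or_pos n with h0 | h0
  · subst h0; simp [cntGt]
  have hn : (0 : ℝ) < n := by exact_mod_cast h0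
  set p : ℝ := cntGt r t / n with hp
  have hp0 : 0 ≤ p := by
    apply div_nonneg _ hn.le
    exact Finset.sum_nonneg fun i _ => by split_ifs <;> norm_num
  have hp1 : p ≤ 1 := by
    rw [hp, div_le_one hn]
    calc cntGt r t ≤ ∑ i : Fin n, (1 : ℝ) :=
          Finset.sum_le_sum fun i _ => by split_ifs <;> norm_num
      _ = n := by simp
  have key := var_bound (fun i => (if t < r i then (1 : ℝ) else 0) - p) (by
    rw [Finset.sum_sub_distrib]
    simp only [Finset.sum_const, Finset.card_univ, Fintype.card_fin, nsmul_eq_mul]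
    rw [hp, mul_div_cancel₀ _ hn.ne']
    exact sub_self _) (by
    intro i
    rw [abs_le]
    split_ifs <;> constructor <;> linarith)
  convert key using 3 with I _
  rw [Finset.sum_sub_distrib]
  simp only [Finset.sum_const, Finset.card_univ, Fintype.card_fin, nsmul_eq_mul]
  rw [hp, mul_div_cancel₀ _ hn.ne']
  rfl

lemma lip_l1 {n : ℕ} {M Lc : ℝ} (μ : (Fin n → ℝ) → ℝ)
    (hlip : ∀ x : Fin n → ℝ, (∀ i, x i ∈ Set.Icc (0 : ℝ) M) → ∀ i, ∀ a ∈ Set.Icc 0 M,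
      |μ (Function.update x i a) - μ x| ≤ Lc * |a - x i|)
    (x y : Fin n → ℝ) (hx : ∀ i, x i ∈ Set.Icc (0 : ℝ) M) (hy : ∀ i, y i ∈ Set.Icc (0 : ℝ) M) :
    |μ y - μ x| ≤ Lc * ∑ i, |y i - x i| := by
  have : ∀ s : Finset (Fin n), |μ (s.piecewise y x) - μ x| ≤ Lc * ∑ i ∈ s, |y i - x i| := by
    intro s
    induction s using Finset.induction_on with
    | empty => simp
    | insert i s hi ih =>
      rw [Finset.piecewise_insert, Finset.sum_insert hi, mul_add]
      have hmem : ∀ j, s.piecewise y x j ∈ Set.Icc (0 : ℝ) M := by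
        intro j
        by_cases hj : j ∈ s
        · rw [Finset.piecewise_eq_of_mem _ _ _ hj]; exact hy j
        · rw [Finset.piecewise_eq_of_notMem _ _ _ hj]; exact hx j
      have h1 := hlip _ hmem i (y i) (hy i)
      rw [Finset.piecewise_eq_of_notMem _ _ _ hi] at h1
      have := abs_sub_le (μ (Function.update (s.piecewise y x) i (y i))) (μ (s.piecewise y x)) (μ x)
      linarith
  simpa using this Finset.univ

lemma sample_err {n : ℕ} {M Lc : ℝ} (hM : 0 ≤ M) (hL : 0 ≤ Lc) (μ : (Fin n → ℝ) → ℝ)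
    (hperm : ∀ x (σ : Equiv.Perm (Fin n)), μ (x ∘ σ) = μ x)
    (hlip : ∀ x : Fin n → ℝ, (∀ i, x i ∈ Set.Icc (0 : ℝ) M) → ∀ i, ∀ a ∈ Set.Icc 0 M,
      |μ (Function.update x i a) - μ x| ≤ Lc * |a - x i|)
    (r : Fin n → ℝ) (hr : ∀ i, r i ∈ Set.Icc (0 : ℝ) M) :
    |∑ I : Fin n → Fin n, μ (r ∘ I) - (n : ℝ) ^ n * μ r| ≤ (n : ℝ) ^ n * (Lc * M * √n) := by
  have e : ∑ I : Fin n → Fin n, μ (r ∘ I) - (n : ℝ) ^ n * μ r =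
      ∑ I : Fin n → Fin n, (μ (r ∘ I) - μ r) := by
    rw [Finset.sum_sub_distrib]; simp
  have hint : ∀ I : Fin n → Fin n,
      IntervalIntegrable (fun t => |cntGt (r ∘ I) t - cntGt r t|) volume 0 M := by
    intro I
    apply IntervalIntegrable.abs
    apply IntervalIntegrable.sub <;>
    · unfold cntGt
      have := IntervalIntegrable.sum (μ := volume) (a := 0) (b := M) Finset.univ
        (f := fun (i : Fin n) t => if t < (r ∘ I) i then (1 : ℝ) else 0)
        (fun i _ => stepF_intervalIntegrable _ _ _)
      have := IntervalIntegrable.sum (μ := volume) (a := 0) (b := M) Finset.univ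
        (f := fun (i : Fin n) t => if t < r i then (1 : ℝ) else 0)
        (fun i _ => stepF_intervalIntegrable _ _ _)
      simp only [Finset.sum_fn] at *
      assumption
  rw [e]
  calc |∑ I : Fin n → Fin n, (μ (r ∘ I) - μ r)| ≤ ∑ I : Fin n → Fin n, |μ (r ∘ I) - μ r| :=
        Finset.abs_sum_le_sum_abs _ _
    _ ≤ ∑ I : Fin n → Fin n, Lc * ∫ t in (0 : ℝ)..M, |cntGt (r ∘ I) t - cntGt r t| := by
        apply Finset.sum_le_sum
        intro I _
        have h1 : μ (descSort (r ∘ I)) = μ (r ∘ I) := hperm _ _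
        have h2 : μ (descSort r) = μ r := hperm _ _
        rw [← h1, ← h2]
        refine (lip_l1 μ hlip (descSort r) (descSort (r ∘ I)) (fun i => hr _)
          (fun i => hr _)).trans ?_
        apply mul_le_mul_of_nonneg_left _ hL
        refine (sorted_l1 hM (descSort (r ∘ I)) (descSort r) (fun i => hr _) (fun i => hr _) (descSort_antitone _)
          (descSort_antitone _)).trans ?_
        simp only [cntGt_descSort]
        exact le_rfl
    _ = Lc * ∫ t in (0 : ℝ)..M, ∑ I : Fin n → Fin n, |cntGt (r ∘ I) t - cntGt r t| := by
        rw [intervalIntegral.integral_finsetSum (fun I _ => hint I), Finset.mul_sum]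
    _ ≤ Lc * ∫ t in (0 : ℝ)..M, (n : ℝ) ^ n * √n := by
        apply mul_le_mul_of_nonneg_left _ hL
        apply intervalIntegral.integral_mono_on hM _ (by simp) (fun t _ => cnt_sample r t)
        have := IntervalIntegrable.sum (μ := volume) (a := 0) (b := M) Finset.univ
          (f := fun (I : Fin n → Fin n) t => |cntGt (r ∘ I) t - cntGt r t|) (fun I _ => hint I)
        simpa only [Finset.sum_fn] using this
    _ = _ := by simp; ring

lemma abstract_main {n : ℕ} {M Lc c θ : ℝ} (hM : 0 ≤ M) (hL : 0 ≤ Lc) (hc : 0 ≤ c) (hθ : 0 ≤ θ)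
    (μ : (Fin n → ℝ) → ℝ)
    (hperm : ∀ x (σ : Equiv.Perm (Fin n)), μ (x ∘ σ) = μ x)
    (hlip : ∀ x : Fin n → ℝ, (∀ i, x i ∈ Set.Icc (0 : ℝ) M) → ∀ i, ∀ a ∈ Set.Icc 0 M,
      |μ (Function.update x i a) - μ x| ≤ Lc * |a - x i|)
    (hconc : ∀ x : Fin n → ℝ, (∀ i, x i ∈ Set.Icc (0 : ℝ) M) → ∀ i, ∃ g : ℝ → ℝ,
      AntitoneOn g (Set.Icc 0 M) ∧ ∀ a ∈ Set.Icc 0 M, ∀ b ∈ Set.Icc 0 M,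
        μ (Function.update x i b) ≤ μ (Function.update x i a) + g a * (b - a) - c * (b - a) ^ 2)
    {r r' : Fin n → ℝ}
    (hr : ∀ i, r i ∈ Set.Icc (0 : ℝ) M) (hr' : ∀ i, r' i ∈ Set.Icc (0 : ℝ) M)
    (hmaj : Majorizes r r') (hgap : θ * n ≤ ∑ i, |descSort r i - descSort r' i|) :
    c * θ ^ 2 * n - 2 * (Lc * M * √n) ≤ μ r' - μ r := by
  let h : ℕ → (Fin n → Fin n) → Fin n → ℝ := fun j I i => if (i : ℕ) < j then r' (I i) else r (I i)
  have hmem : ∀ j I i, h j I i ∈ Set.Icc (0 : ℝ) M := by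
    intro j I i
    simp only [h]; split_ifs
    · exact hr' _
    · exact hr _
  have step : ∀ j : ℕ, j < n → (n : ℝ) ^ n * (c * θ ^ 2) ≤
      ∑ I : Fin n → Fin n, μ (h (j + 1) I) - ∑ I : Fin n → Fin n, μ (h j I) := by
    intro j hj
    have hn : (0 : ℝ) < n := by exact_mod_cast (by omega : 0 < n)
    rw [← Finset.sum_sub_distrib]
    have key := resample ⟨j, hj⟩ (fun I => μ (h (j + 1) I) - μ (h j I))
    have e1 : ∀ I l, h (j + 1) (Function.update I ⟨j, hj⟩ l) =
        Function.update (h j I) ⟨j, hj⟩ (r' l) := by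
      intro I l
      ext i
      by_cases hi : i = ⟨j, hj⟩
      · subst hi; simp [h]
      · have : (i : ℕ) ≠ j := fun hh => hi (Fin.ext hh)
        simp only [h, Function.update_of_ne hi]
        congr 1
        simp only [eq_iff_iff]; omega
    have e2 : ∀ I l, h j (Function.update I ⟨j, hj⟩ l) =
        Function.update (h j I) ⟨j, hj⟩ (r l) := by
      intro I l
      ext i
      by_cases hi : i = ⟨j, hj⟩
      · subst hi; simp [h]
      · simp only [h, Function.update_of_ne hi]
    simp only [e1, e2] at key
    have low : ∑ I : Fin n → Fin n, c * θ ^ 2 * n ≤ ∑ I : Fin n → Fin n,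
        ∑ l, (μ (Function.update (h j I) ⟨j, hj⟩ (r' l)) -
          μ (Function.update (h j I) ⟨j, hj⟩ (r l))) := by
      apply Finset.sum_le_sum
      intro I _
      obtain ⟨g, hg, hg2⟩ := hconc (h j I) (hmem j I) ⟨j, hj⟩
      exact strong_karamata hc hθ hr hr' hmaj hgap
        (fun a => μ (Function.update (h j I) ⟨j, hj⟩ a)) g hg hg2
    rw [key] at low
    simp only [Finset.sum_const, Finset.card_univ, Fintype.card_fun, Fintype.card_fin,
      nsmul_eq_mul, Nat.cast_pow] at low
    have : (n : ℝ) * ((n : ℝ) ^ n * (c * θ ^ 2)) ≤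
      n * ∑ I : Fin n → Fin n, (μ (h (j + 1) I) - μ (h j I)) := by
      refine le_trans (le_of_eq ?_) low
      ring
    exact le_of_mul_le_mul_left this hn
  have tot : ∀ j : ℕ, j ≤ n → j * ((n : ℝ) ^ n * (c * θ ^ 2)) ≤
      ∑ I : Fin n → Fin n, μ (h j I) - ∑ I : Fin n → Fin n, μ (h 0 I) := by
    intro j
    induction j with
    | zero => intro _; simp
    | succ j ih =>
      intro hj
      have := ih (by omega)
      have := step j (by omega)
      push_cast
      linarith
  have h0 : ∀ I, h 0 I = r ∘ I := by intro I; ext i; simp [h]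
  have hnn : ∀ I, h n I = r' ∘ I := by intro I; ext i; simp [h]
  have key := tot n le_rfl
  simp only [h0, hnn] at key
  have s1 := abs_le.1 (sample_err hM hL μ hperm hlip r hr)
  have s2 := abs_le.1 (sample_err hM hL μ hperm hlip r' hr')
  have hK : (0 : ℝ) < (n : ℝ) ^ n := by
    rcases Nat.eq_zero_or_pos n with h0 | h0
    · subst h0; simp
    · have : (0 : ℝ) < n := by exact_mod_cast h0
      positivity
  apply le_of_mul_le_mul_left _ hK
  linarith [s1.1, s2.2]


section radial

variable {k : ℕ}

lemma finrank_EE : Module.finrank ℝ (EuclideanSpace ℝ (Fin k)) = k := by simp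

/-- volume of the unit ball -/
def omg (k : ℕ) : ℝ := (volume : Measure (EuclideanSpace ℝ (Fin k))).real (Metric.ball 0 1)

lemma omg_pos : 0 < omg k := by
  unfold omg
  exact ENNReal.toReal_pos (Metric.measure_ball_pos _ _ one_pos).ne' measure_ball_lt_top.ne

lemma vol_closedBall (x : EuclideanSpace ℝ (Fin k)) {t : ℝ} (ht : 0 ≤ t) :
    (volume : Measure (EuclideanSpace ℝ (Fin k))).real (Metric.closedBall x t) = t ^ k * omg k := by
  unfold omg Measure.real
  rw [Measure.addHaar_closedBall _ _ ht, finrank_EE, ENNReal.toReal_mul,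
    ENNReal.toReal_ofReal (by positivity)]

lemma vol_ball (hk : 2 ≤ k) (x : EuclideanSpace ℝ (Fin k)) {t : ℝ} (ht : 0 ≤ t) :
    (volume : Measure (EuclideanSpace ℝ (Fin k))).real (Metric.ball x t) = t ^ k * omg k := by
  haveI : Nontrivial (EuclideanSpace ℝ (Fin k)) :=
    Module.nontrivial_of_finrank_pos (R := ℝ) (by rw [finrank_EE]; omega)
  unfold omg Measure.real
  rw [Measure.addHaar_ball _ _ ht, finrank_EE, ENNReal.toReal_mul,
    ENNReal.toReal_ofReal (by positivity)]

lemma homog_int (hk : 2 ≤ k) (f : EuclideanSpace ℝ (Fin k) → ℝ)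
    (hf : ∀ l : ℝ, 0 < l → ∀ w, f (l • w) = f w) {t : ℝ} (ht : 0 ≤ t) :
    ∫ w in Metric.closedBall (0 : EuclideanSpace ℝ (Fin k)) t, f w =
      t ^ k * ∫ w in Metric.closedBall (0 : EuclideanSpace ℝ (Fin k)) 1, f w := by
  rcases ht.eq_or_lt with rfl | ht
  · haveI : Nontrivial (EuclideanSpace ℝ (Fin k)) :=
      Module.nontrivial_of_finrank_pos (R := ℝ) (by rw [finrank_EE]; omega)
    rw [Metric.closedBall_zero, Measure.restrict_singleton]
    simp [show k ≠ 0 by omega]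
  · have := Measure.setIntegral_comp_smul_of_pos (volume : Measure (EuclideanSpace ℝ (Fin k))) f
      (Metric.closedBall 0 1) ht
    rw [finrank_EE, smul_unitClosedBall_of_nonneg ht.le, smul_eq_mul] at this
    simp only [hf t ht] at this
    rw [this]
    field_simp

lemma annulus_vol {s t : ℝ} (hs : 0 ≤ s) (hst : s ≤ t) :
    (volume : Measure (EuclideanSpace ℝ (Fin k))).real
      (Metric.closedBall 0 t \ Metric.closedBall 0 s) = (t ^ k - s ^ k) * omg k := by
  rw [measureReal_sdiff (Metric.closedBall_subset_closedBall hst) measurableSet_closedBall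
    measure_closedBall_lt_top.ne, vol_closedBall _ hs, vol_closedBall _ (hs.trans hst)]
  ring

lemma annulus_int {f : EuclideanSpace ℝ (Fin k) → ℝ} {s t : ℝ} (hst : s ≤ t)
    (hf : IntegrableOn f (Metric.closedBall 0 t)) :
    ∫ w in Metric.closedBall 0 t \ Metric.closedBall 0 s, f w =
      (∫ w in Metric.closedBall 0 t, f w) - ∫ w in Metric.closedBall 0 s, f w := by
  rw [setIntegral_sdiff measurableSet_closedBall hf (Metric.closedBall_subset_closedBall hst)]

lemma bdd_integrableOn {f : EuclideanSpace ℝ (Fin k) → ℝ} (hf : Measurable f) {B : ℝ}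
    (hB : ∀ w, |f w| ≤ B) (s : Set (EuclideanSpace ℝ (Fin k))) (hs : volume s < ⊤) :
    IntegrableOn f s := by
  haveI : IsFiniteMeasure (volume.restrict s) := ⟨by simpa using hs⟩
  exact Integrable.of_bound hf.aestronglyMeasurable B (.of_forall hB)

lemma exists_mid (hk : 2 ≤ k) {s t : ℝ} (hs : 0 ≤ s) (hst : s ≤ t) :
    ∃ τ, s ≤ τ ∧ τ ≤ t ∧ τ ^ k = (s ^ k + t ^ k) / 2 := by
  have h1 : s ^ k ≤ t ^ k := pow_le_pow_left₀ hs hst k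
  have := intermediate_value_Icc hst (f := fun x : ℝ => x ^ k) (by fun_prop)
  obtain ⟨τ, hτ, h⟩ := this (show (s ^ k + t ^ k) / 2 ∈ Set.Icc (s ^ k) (t ^ k) by
    constructor <;> linarith)
  exact ⟨τ, hτ.1, hτ.2, h⟩

/-- direction function -/
def dirF (q : EuclideanSpace ℝ (Fin k) → ℝ) (s : ℝ) (w : EuclideanSpace ℝ (Fin k)) : ℝ :=
  q (s • (‖w‖⁻¹ • w))

def hF (q : EuclideanSpace ℝ (Fin k) → ℝ) (s : ℝ) : ℝ :=
  ∫ w in Metric.closedBall (0 : EuclideanSpace ℝ (Fin k)) 1, dirF q s w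

lemma dirF_homog (q : EuclideanSpace ℝ (Fin k) → ℝ) (s : ℝ) (l : ℝ) (hl : 0 < l)
    (w : EuclideanSpace ℝ (Fin k)) : dirF q s (l • w) = dirF q s w := by
  unfold dirF
  congr 2
  rw [norm_smul, Real.norm_of_nonneg hl.le, smul_smul]
  congr 1
  rw [mul_inv]
  field_simp

lemma dirF_meas {q : EuclideanSpace ℝ (Fin k) → ℝ} (hq : Measurable q) (s : ℝ) :
    Measurable (dirF q s) := by
  unfold dirF
  exact hq.comp (by fun_prop)

lemma annulus_dir (hk : 2 ≤ k) {q : EuclideanSpace ℝ (Fin k) → ℝ} (hq : Measurable q) {B : ℝ}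
    (hB : ∀ w, |q w| ≤ B) (z : ℝ) {s t : ℝ} (hs : 0 ≤ s) (hst : s ≤ t) :
    ∫ w in Metric.closedBall 0 t \ Metric.closedBall 0 s, dirF q z w =
      (t ^ k - s ^ k) * hF q z := by
  rw [annulus_int hst (bdd_integrableOn (dirF_meas hq z) (fun w => hB _) _
    measure_closedBall_lt_top), homog_int hk _ (dirF_homog q z) hs,
    homog_int hk _ (dirF_homog q z) (hs.trans hst)]
  unfold hF
  ring

lemma mem_annulus {s t : ℝ} {w : EuclideanSpace ℝ (Fin k)} :
    w ∈ Metric.closedBall (0 : EuclideanSpace ℝ (Fin k)) t \ Metric.closedBall 0 s ↔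
      s < ‖w‖ ∧ ‖w‖ ≤ t := by
  simp [and_comm]

lemma annulus_fin {s t : ℝ} : (volume : Measure (EuclideanSpace ℝ (Fin k)))
    (Metric.closedBall 0 t \ Metric.closedBall 0 s) < ⊤ :=
  (measure_mono Set.sdiff_subset).trans_lt measure_closedBall_lt_top

lemma annulus_meas {s t : ℝ} : MeasurableSet
    (Metric.closedBall (0 : EuclideanSpace ℝ (Fin k)) t \ Metric.closedBall 0 s) :=
  measurableSet_closedBall.diff measurableSet_closedBall

lemma pow_norm_intOn {s t : ℝ} : IntegrableOn (fun w : EuclideanSpace ℝ (Fin k) => ‖w‖ ^ k)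
    (Metric.closedBall 0 t \ Metric.closedBall 0 s) := by
  apply IntegrableOn.mono_set _ Set.sdiff_subset
  exact ContinuousOn.integrableOn_compact (isCompact_closedBall _ _) (by fun_prop)

lemma annulus_low (hk : 2 ≤ k) {s t : ℝ} (hs : 0 ≤ s) (hst : s ≤ t) :
    omg k / 4 * (t ^ k - s ^ k) ^ 2 ≤
      ∫ w in Metric.closedBall (0 : EuclideanSpace ℝ (Fin k)) t \ Metric.closedBall 0 s,
        (‖w‖ ^ k - s ^ k) := by
  obtain ⟨τ, h1, h2, h3⟩ := exists_mid hk hs hst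
  have hi : IntegrableOn (fun w : EuclideanSpace ℝ (Fin k) => ‖w‖ ^ k - s ^ k)
    (Metric.closedBall 0 t \ Metric.closedBall 0 s) :=
    pow_norm_intOn.sub (integrableOn_const annulus_fin.ne)
  have hsub : Metric.closedBall (0 : EuclideanSpace ℝ (Fin k)) t \ Metric.closedBall 0 τ ⊆
      Metric.closedBall 0 t \ Metric.closedBall 0 s :=
    Set.sdiff_subset_sdiff_right (Metric.closedBall_subset_closedBall h1)
  calc omg k / 4 * (t ^ k - s ^ k) ^ 2
      = ∫ w in Metric.closedBall (0 : EuclideanSpace ℝ (Fin k)) t \ Metric.closedBall 0 τ,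
        (t ^ k - s ^ k) / 2 := by
        rw [setIntegral_const, annulus_vol (hs.trans h1) h2, h3, smul_eq_mul]; ring
    _ ≤ ∫ w in Metric.closedBall (0 : EuclideanSpace ℝ (Fin k)) t \ Metric.closedBall 0 τ,
        (‖w‖ ^ k - s ^ k) := by
        apply setIntegral_mono_on (integrableOn_const annulus_fin.ne) (hi.mono_set hsub) annulus_meas
        intro w hw
        have := mem_annulus.1 hw
        have h4 : τ ^ k ≤ ‖w‖ ^ k := pow_le_pow_left₀ (hs.trans h1) this.1.le k
        linarith
    _ ≤ _ := by
        apply setIntegral_mono_set hi _ hsub.eventuallyLE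
        rw [Filter.EventuallyLE, ae_restrict_iff' annulus_meas]
        refine .of_forall fun w hw => ?_
        have := mem_annulus.1 hw
        have h4 : s ^ k ≤ ‖w‖ ^ k := pow_le_pow_left₀ hs this.1.le k
        simp only [Pi.zero_apply]; linarith

lemma annulus_high (hk : 2 ≤ k) {s t : ℝ} (hs : 0 ≤ s) (hst : s ≤ t) :
    omg k / 4 * (t ^ k - s ^ k) ^ 2 ≤
      ∫ w in Metric.closedBall (0 : EuclideanSpace ℝ (Fin k)) t \ Metric.closedBall 0 s,
        (t ^ k - ‖w‖ ^ k) := by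
  obtain ⟨τ, h1, h2, h3⟩ := exists_mid hk hs hst
  have hi : IntegrableOn (fun w : EuclideanSpace ℝ (Fin k) => t ^ k - ‖w‖ ^ k)
    (Metric.closedBall 0 t \ Metric.closedBall 0 s) :=
    (integrableOn_const annulus_fin.ne).sub pow_norm_intOn
  have hsub : Metric.closedBall (0 : EuclideanSpace ℝ (Fin k)) τ \ Metric.closedBall 0 s ⊆
      Metric.closedBall 0 t \ Metric.closedBall 0 s :=
    Set.sdiff_subset_sdiff_left (Metric.closedBall_subset_closedBall h2)
  calc omg k / 4 * (t ^ k - s ^ k) ^ 2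
      = ∫ w in Metric.closedBall (0 : EuclideanSpace ℝ (Fin k)) τ \ Metric.closedBall 0 s,
        (t ^ k - s ^ k) / 2 := by
        rw [setIntegral_const, annulus_vol hs h1, h3, smul_eq_mul]; ring
    _ ≤ ∫ w in Metric.closedBall (0 : EuclideanSpace ℝ (Fin k)) τ \ Metric.closedBall 0 s,
        (t ^ k - ‖w‖ ^ k) := by
        apply setIntegral_mono_on (integrableOn_const annulus_fin.ne) (hi.mono_set hsub) annulus_meas
        intro w hw
        have := mem_annulus.1 hw
        have h4 : ‖w‖ ^ k ≤ τ ^ k := pow_le_pow_left₀ (norm_nonneg _) this.2 k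
        linarith
    _ ≤ _ := by
        apply setIntegral_mono_set hi _ hsub.eventuallyLE
        rw [Filter.EventuallyLE, ae_restrict_iff' annulus_meas]
        refine .of_forall fun w hw => ?_
        have := mem_annulus.1 hw
        have h4 : ‖w‖ ^ k ≤ t ^ k := pow_le_pow_left₀ (norm_nonneg _) this.2 k
        simp only [Pi.zero_apply]; linarith

lemma radial (hk : 2 ≤ k) {q : EuclideanSpace ℝ (Fin k) → ℝ} (hq : Measurable q) {B R c0 : ℝ}
    (hc0 : 0 ≤ c0) (hB0 : ∀ w, 0 ≤ q w) (hB : ∀ w, q w ≤ B)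
    (hdec : ∀ u : EuclideanSpace ℝ (Fin k), ‖u‖ = 1 → ∀ s t : ℝ, 0 ≤ s → s ≤ t → t ≤ R →
      q (t • u) + c0 * (t ^ k - s ^ k) ≤ q (s • u))
    {s t : ℝ} (hs : 0 ≤ s) (hst : s ≤ t) (htR : t ≤ R) :
    ((∫ w in Metric.closedBall 0 t, q w) - (∫ w in Metric.closedBall 0 s, q w) ≤
      (t ^ k - s ^ k) * hF q s - c0 * (omg k / 4 * (t ^ k - s ^ k) ^ 2)) ∧
    ((t ^ k - s ^ k) * hF q t + c0 * (omg k / 4 * (t ^ k - s ^ k) ^ 2) ≤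
      (∫ w in Metric.closedBall 0 t, q w) - (∫ w in Metric.closedBall 0 s, q w)) ∧
    hF q t ≤ hF q s ∧
    (0 ≤ (∫ w in Metric.closedBall 0 t, q w) - (∫ w in Metric.closedBall 0 s, q w)) ∧
    ((∫ w in Metric.closedBall 0 t, q w) - (∫ w in Metric.closedBall 0 s, q w) ≤
      B * omg k * (t ^ k - s ^ k)) := by
  have habs : ∀ w, |q w| ≤ B := fun w => by rw [abs_of_nonneg (hB0 w)]; exact hB w
  have hqi : ∀ S : Set (EuclideanSpace ℝ (Fin k)), volume S < ⊤ → IntegrableOn q S :=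
    bdd_integrableOn hq habs
  have hdi : ∀ z, ∀ S : Set (EuclideanSpace ℝ (Fin k)), volume S < ⊤ → IntegrableOn (dirF q z) S :=
    fun z => bdd_integrableOn (dirF_meas hq z) (fun w => habs _)
  have hdir : ∀ w : EuclideanSpace ℝ (Fin k), w ≠ 0 → ‖‖w‖⁻¹ • w‖ = 1 := by
    intro w hw
    rw [norm_smul, norm_inv, norm_norm, inv_mul_cancel₀ (norm_ne_zero_iff.2 hw)]
  have hself : ∀ w : EuclideanSpace ℝ (Fin k), w ≠ 0 → ‖w‖ • (‖w‖⁻¹ • w) = w := by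
    intro w hw
    rw [smul_smul, mul_inv_cancel₀ (norm_ne_zero_iff.2 hw), one_smul]
  rw [← annulus_int hst (hqi _ measure_closedBall_lt_top)]
  have hlow := annulus_low hk hs hst
  have hhigh := annulus_high hk hs hst
  have hne : ∀ w ∈ Metric.closedBall (0 : EuclideanSpace ℝ (Fin k)) t \ Metric.closedBall 0 s,
      w ≠ 0 := by
    intro w hw h0
    have := mem_annulus.1 hw
    rw [h0, norm_zero] at this
    linarith
  have hI1 : IntegrableOn (fun w : EuclideanSpace ℝ (Fin k) => ‖w‖ ^ k - s ^ k)
    (Metric.closedBall 0 t \ Metric.closedBall 0 s) :=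
    pow_norm_intOn.sub (integrableOn_const annulus_fin.ne)
  have hI2 : IntegrableOn (fun w : EuclideanSpace ℝ (Fin k) => t ^ k - ‖w‖ ^ k)
    (Metric.closedBall 0 t \ Metric.closedBall 0 s) :=
    (integrableOn_const annulus_fin.ne).sub pow_norm_intOn
  refine ⟨?_, ?_, ?_, ?_, ?_⟩
  · calc _ ≤ ∫ w in Metric.closedBall (0 : EuclideanSpace ℝ (Fin k)) t \ Metric.closedBall 0 s,
          (dirF q s w - c0 * (‖w‖ ^ k - s ^ k)) := by
          apply setIntegral_mono_on (hqi _ annulus_fin)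
            ((hdi s _ annulus_fin).sub (hI1.const_mul c0)) annulus_meas
          intro w hw
          have h1 := mem_annulus.1 hw
          have := hdec _ (hdir w (hne w hw)) s ‖w‖ hs h1.1.le (h1.2.trans htR)
          rw [hself w (hne w hw)] at this
          simp only [dirF, Pi.sub_apply]
          linarith
      _ = (t ^ k - s ^ k) * hF q s - c0 *
          ∫ w in Metric.closedBall (0 : EuclideanSpace ℝ (Fin k)) t \ Metric.closedBall 0 s,
            (‖w‖ ^ k - s ^ k) := by
          rw [integral_sub (hdi s _ annulus_fin) (hI1.const_mul c0),
            annulus_dir hk hq habs s hs hst, integral_const_mul]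
      _ ≤ _ := by
          have := mul_le_mul_of_nonneg_left hlow hc0
          linarith
  · calc _ ≤ (t ^ k - s ^ k) * hF q t + c0 *
          ∫ w in Metric.closedBall (0 : EuclideanSpace ℝ (Fin k)) t \ Metric.closedBall 0 s,
            (t ^ k - ‖w‖ ^ k) := by
          have := mul_le_mul_of_nonneg_left hhigh hc0
          linarith
      _ = ∫ w in Metric.closedBall (0 : EuclideanSpace ℝ (Fin k)) t \ Metric.closedBall 0 s,
          (dirF q t w + c0 * (t ^ k - ‖w‖ ^ k)) := by
          rw [integral_add (hdi t _ annulus_fin) (hI2.const_mul c0),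
            annulus_dir hk hq habs t hs hst, integral_const_mul]
      _ ≤ _ := by
          apply setIntegral_mono_on ((hdi t _ annulus_fin).add (hI2.const_mul c0))
            (hqi _ annulus_fin) annulus_meas
          intro w hw
          have h1 := mem_annulus.1 hw
          have := hdec _ (hdir w (hne w hw)) ‖w‖ t (norm_nonneg _) h1.2 htR
          rw [hself w (hne w hw)] at this
          simp only [dirF, Pi.add_apply]
          linarith
  · unfold hF
    haveI : Nontrivial (EuclideanSpace ℝ (Fin k)) :=
      Module.nontrivial_of_finrank_pos (R := ℝ) (by rw [finrank_EE]; omega)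
    apply integral_mono_ae (hdi t _ measure_closedBall_lt_top) (hdi s _ measure_closedBall_lt_top)
    apply ae_restrict_of_ae
    have : ∀ᵐ w : EuclideanSpace ℝ (Fin k), w ≠ 0 := by simp [ae_iff, measure_singleton]
    filter_upwards [this] with w hw
    have := hdec _ (hdir w hw) s t hs hst htR
    have h4 : s ^ k ≤ t ^ k := pow_le_pow_left₀ hs hst k
    have := mul_nonneg hc0 (sub_nonneg.2 h4)
    unfold dirF
    linarith
  · exact setIntegral_nonneg annulus_meas fun w _ => hB0 w
  · calc _ ≤ ∫ w in Metric.closedBall (0 : EuclideanSpace ℝ (Fin k)) t \ Metric.closedBall 0 s, B :=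
          setIntegral_mono (hqi _ annulus_fin) (integrableOn_const annulus_fin.ne) hB
      _ = _ := by rw [setIntegral_const, annulus_vol hs hst, smul_eq_mul]; ring

end radial


section prob

variable {k : ℕ}

abbrev EE (k : ℕ) := EuclideanSpace ℝ (Fin k)

def boxQ (k : ℕ) (a b : ℝ) : Set (EE k) := {x | ∀ i, x i ∈ Set.Icc a b}

lemma boxQ_vol (a b : ℝ) : (volume : Measure (EE k)) (boxQ k a b) = ENNReal.ofReal (b - a) ^ k := by
  have h := (PiLp.volume_preserving_ofLp (Fin k))
  have h2 : boxQ k a b = (WithLp.ofLp : EE k → (Fin k → ℝ)) ⁻¹' (Set.pi Set.univ fun _ => Set.Icc a b) := by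
    ext x; simp only [boxQ, Set.mem_ofPred_eq, Set.mem_preimage, Set.mem_pi, Set.mem_univ, true_imp_iff]
  rw [h2, h.measure_preimage (MeasurableSet.univ_pi fun _ => measurableSet_Icc).nullMeasurableSet,
    volume_pi_pi]
  simp

lemma boxQ_closed (a b : ℝ) : IsClosed (boxQ k a b) := by
  have : boxQ k a b = ⋂ i, {x : EE k | x i ∈ Set.Icc a b} := by ext; simp [boxQ]
  rw [this]
  exact isClosed_iInter fun i => isClosed_Icc.preimage (by fun_prop)

lemma boxQ_meas (a b : ℝ) : MeasurableSet (boxQ k a b) := (boxQ_closed a b).measurableSet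

lemma unifCube_eq : unifCube k = volume.restrict (boxQ k 0 1) := rfl

instance : IsProbabilityMeasure (unifCube k) := ⟨by
  rw [unifCube_eq, Measure.restrict_apply_univ, boxQ_vol]; simp⟩

abbrev PU (k a : ℕ) : Measure (Fin a → EE k) := Measure.pi fun _ => unifCube k

lemma PU_ae (a : ℕ) : ∀ᵐ D ∂(PU k a), ∀ j, D j ∈ boxQ k 0 1 := by
  rw [ae_all_iff]
  intro j
  have h1 : ∀ᵐ x ∂(unifCube k), x ∈ boxQ k 0 1 := ae_restrict_mem (boxQ_meas 0 1)
  exact (measurePreserving_eval (fun _ : Fin a => unifCube k) j).quasiMeasurePreserving.ae h1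

lemma meas_adj (n a m : ℕ) (r : Fin a → ℝ) :
    Measurable (fun p : (Fin a → EE k) × (Fin m → EE k) => adjOf k n p.1 r p.2) := by
  refine measurable_pi_lambda _ fun i => measurable_pi_lambda _ fun j => ?_
  unfold adjOf
  apply measurableSet_setOfPred.1
  exact measurableSet_le (by fun_prop) (by fun_prop)

lemma meas_adj_comp {α : Type*} [MeasurableSpace α] (n a m : ℕ) (r : Fin a → ℝ)
    (F : (Fin a → Fin m → Prop) → α) :
    Measurable (fun p : (Fin a → EE k) × (Fin m → EE k) => F (adjOf k n p.1 r p.2)) :=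
  (Measurable.of_discrete (f := F)).comp (meas_adj n a m r)

abbrev PP (k a m : ℕ) : Measure ((Fin a → EE k) × (Fin m → EE k)) := (PU k a).prod (PU k m)

lemma adj_comp_integrable (n a m : ℕ) (r : Fin a → ℝ) (F : (Fin a → Fin m → Prop) → ℝ) :
    Integrable (fun p : (Fin a → EE k) × (Fin m → EE k) => F (adjOf k n p.1 r p.2)) (PP k a m) := by
  obtain ⟨B, hB⟩ : ∃ B, ∀ x, ‖F x‖ ≤ B := by
    obtain ⟨B, hB⟩ := (Set.finite_range (fun x => ‖F x‖)).bddAbove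
    exact ⟨B, fun x => hB ⟨x, rfl⟩⟩
  exact Integrable.of_bound (meas_adj_comp n a m r F).aestronglyMeasurable B (.of_forall fun _ => hB _)

lemma muU_eq (n a m : ℕ) (r : Fin a → ℝ) :
    muU k n m r = ∫ p, (matchingNumber (adjOf k n p.1 r p.2) : ℝ) ∂(PP k a m) := by
  rw [integral_prod _ (adj_comp_integrable n a m r fun x => (matchingNumber x : ℝ))]
  rfl

lemma muU_perm (n a m : ℕ) (r : Fin a → ℝ) (σ : Equiv.Perm (Fin a)) :
    muU k n m (r ∘ σ) = muU k n m r := by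
  unfold muU
  have hp := measurePreserving_piCongrLeft (fun _ : Fin a => unifCube k) σ
  rw [← hp.integral_comp' (g := fun S : Fin a → EE k => ∫ D : Fin m → EE k,
      (matchingNumber (fun i j => adjOf k n S r D i j) : ℝ) ∂(PU k m))]
  refine integral_congr_ae (.of_forall fun S => integral_congr_ae (.of_forall fun D => ?_))
  dsimp only
  rw [← mn_perm (fun i j => adjOf k n ((MeasurableEquiv.piCongrLeft (fun _ : Fin a => EE k) σ) S) r D i j) σ]
  congr 2
  funext i j
  unfold adjOf
  have : (MeasurableEquiv.piCongrLeft (fun _ : Fin a => EE k) σ) S (σ i) = S i :=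
    Equiv.piCongrLeft_apply_apply (fun _ => EE k) σ S i
  rw [this]; rfl

/-- resampling a coordinate -/
lemma mp_update (a : ℕ) (i : Fin a) :
    MeasurePreserving (fun q : (Fin a → EE k) × EE k => Function.update q.1 i q.2)
      ((PU k a).prod (unifCube k)) (PU k a) := by
  have hm : Measurable (fun q : (Fin a → EE k) × EE k => Function.update q.1 i q.2) := by
    refine measurable_pi_lambda _ fun j => ?_
    by_cases h : j = i
    · subst h; simp only [Function.update_self]; fun_prop
    · simp only [Function.update_of_ne h]; fun_prop
  refine ⟨hm, ?_⟩
  symm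
  apply Measure.pi_eq
  intro s hs
  rw [Measure.map_apply hm (MeasurableSet.univ_pi hs)]
  have : (fun q : (Fin a → EE k) × EE k => Function.update q.1 i q.2) ⁻¹' Set.univ.pi s =
      (Set.univ.pi (Function.update s i Set.univ)) ×ˢ s i := by
    ext q
    simp only [Set.mem_preimage, Set.mem_pi, Set.mem_univ, true_imp_iff, Set.mem_prod]
    constructor
    · intro h
      refine ⟨fun j => ?_, by simpa using h i⟩
      by_cases hj : j = i
      · subst hj; simp
      · simpa [hj] using h j
    · rintro ⟨h, h'⟩ j
      by_cases hj : j = i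
      · subst hj; simpa
      · simpa [hj] using h j
  rw [this, Measure.prod_prod, Measure.pi_pi, ← Finset.mul_prod_erase Finset.univ _ (Finset.mem_univ i),
    ← Finset.mul_prod_erase Finset.univ (fun j => unifCube k (s j)) (Finset.mem_univ i)]
  rw [Function.update_self, measure_univ, one_mul, mul_comm]
  congr 1
  refine Finset.prod_congr rfl fun j hj => ?_
  rw [Function.update_of_ne (Finset.ne_of_mem_erase hj)]

end prob

section vor

variable {k : ℕ}

def Ev {m : ℕ} (F : Fin m → Prop) (D : Fin m → EE k) (j : Fin m) (w : EE k) : Prop :=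
  F j ∧ D j ∈ boxQ k 0 1 ∧ D j + w ∈ boxQ k 0 1 ∧
    ∀ j', F j' → (j' < j → ‖w‖ < dist (D j + w) (D j')) ∧ (j < j' → ‖w‖ ≤ dist (D j + w) (D j'))

def evN {m : ℕ} (F : Fin m → Prop) (D : Fin m → EE k) (w : EE k) : ℝ :=
  ∑ j, if Ev F D j w then 1 else 0

lemma Ev_meas {α : Type*} [MeasurableSpace α] {m : ℕ} {F : α → Fin m → Prop}
    {D : α → Fin m → EE k} {w : α → EE k} (hF : ∀ j, Measurable fun x => F x j)
    (hD : Measurable D) (hw : Measurable w) (j : Fin m) :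
    MeasurableSet {x | Ev (F x) (D x) j (w x)} := by
  have hDj : ∀ j, Measurable fun x => D x j := fun j => (measurable_pi_apply j).comp hD
  unfold Ev
  refine MeasurableSet.inter (measurableSet_setOfPred.2 (hF j)) (MeasurableSet.inter (hDj j (boxQ_meas 0 1))
    (MeasurableSet.inter (((hDj j).add hw) (boxQ_meas 0 1)) ?_))
  have hall : {x | ∀ j', F x j' → (j' < j → ‖w x‖ < dist (D x j + w x) (D x j')) ∧
      (j < j' → ‖w x‖ ≤ dist (D x j + w x) (D x j'))} = ⋂ j', {x | F x j' →
      (j' < j → ‖w x‖ < dist (D x j + w x) (D x j')) ∧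
      (j < j' → ‖w x‖ ≤ dist (D x j + w x) (D x j'))} := by
    ext x; simp only [Set.mem_iInter, Set.mem_ofPred_eq]
  change MeasurableSet {x | _}
  rw [hall]
  apply MeasurableSet.iInter
  intro j'
  refine MeasurableSet.imp (measurableSet_setOfPred.2 (hF j')) (MeasurableSet.inter ?_ ?_)
  · refine MeasurableSet.imp (MeasurableSet.const _) (measurableSet_lt hw.norm
      (((hDj j).add hw).dist (hDj j')))
  · refine MeasurableSet.imp (MeasurableSet.const _) (measurableSet_le hw.norm
      (((hDj j).add hw).dist (hDj j')))

lemma evN_meas {α : Type*} [MeasurableSpace α] {m : ℕ} {F : α → Fin m → Prop}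
    {D : α → Fin m → EE k} {w : α → EE k} (hF : ∀ j, Measurable fun x => F x j)
    (hD : Measurable D) (hw : Measurable w) :
    Measurable fun x => evN (F x) (D x) (w x) := by
  unfold evN
  exact Finset.measurable_sum _ fun j _ =>
    Measurable.ite (Ev_meas hF hD hw j) measurable_const measurable_const

lemma evN_nonneg {m : ℕ} (F : Fin m → Prop) (D : Fin m → EE k) (w : EE k) : 0 ≤ evN F D w :=
  Finset.sum_nonneg fun j _ => by split_ifs <;> norm_num

lemma evN_le {m : ℕ} (F : Fin m → Prop) (D : Fin m → EE k) (w : EE k) : evN F D w ≤ m := by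
  calc evN F D w ≤ ∑ j : Fin m, (1 : ℝ) := Finset.sum_le_sum fun j _ => by split_ifs <;> norm_num
    _ = m := by simp

lemma Ev_point {m : ℕ} (F : Fin m → Prop) (D : Fin m → EE k) (hD : ∀ j, D j ∈ boxQ k 0 1) (ρ : ℝ)
    (x : EE k) :
    (if x ∈ boxQ k 0 1 ∧ ∃ j, F j ∧ dist x (D j) ≤ ρ then (1 : ℝ) else 0) =
      ∑ j, if Ev F D j (x - D j) ∧ x - D j ∈ Metric.closedBall 0 ρ then (1 : ℝ) else 0 := by
  split_ifs with h
  · obtain ⟨hx, j0, hj0, hd⟩ := h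
    obtain ⟨j, hj, hmin⟩ := Finset.exists_min_image (Finset.univ.filter F)
      (fun j => toLex (dist x (D j), j)) ⟨j0, by simpa using hj0⟩
    have hjF : F j := by simpa using hj
    have hmin' : ∀ j', F j' → dist x (D j) < dist x (D j') ∨ dist x (D j) = dist x (D j') ∧ j ≤ j' := by
      intro j' h'
      have := hmin j' (by simpa using h')
      rwa [Prod.Lex.toLex_le_toLex] at this
    have hE : Ev F D j (x - D j) := by
      refine ⟨hjF, hD j, by simpa using hx, fun j' h' => ?_⟩
      rw [add_sub_cancel, ← dist_eq_norm]
      constructor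
      · intro hlt
        rcases hmin' j' h' with h | h
        · exact h
        · exact absurd h.2 (not_le.2 hlt)
      · intro hlt
        rcases hmin' j' h' with h | h
        · exact h.le
        · exact h.1.le
    have hb : x - D j ∈ Metric.closedBall 0 ρ := by
      rw [mem_closedBall_zero_iff, ← dist_eq_norm]
      rcases hmin' j0 hj0 with h | h
      · exact h.le.trans hd
      · exact h.1.le.trans hd
    rw [Finset.sum_eq_single j, if_pos ⟨hE, hb⟩]
    · intro j' _ hne
      rw [if_neg]
      rintro ⟨h', -⟩
      have h1 := hE.2.2.2 j' h'.1
      have h2 := h'.2.2.2 j hjF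
      rw [add_sub_cancel, ← dist_eq_norm] at h1 h2
      rcases lt_or_gt_of_ne hne with h | h
      · exact absurd (h1.1 h) (not_lt.2 (h2.2 h))
      · exact absurd (h2.1 h) (not_lt.2 (h1.2 h))
    · simp
  · symm
    apply Finset.sum_eq_zero
    intro j _
    rw [if_neg]
    rintro ⟨h', hb⟩
    apply h
    refine ⟨by simpa using h'.2.2.1, j, h'.1, ?_⟩
    rwa [mem_closedBall_zero_iff, ← dist_eq_norm] at hb

lemma vor_int {m : ℕ} (F : Fin m → Prop) (D : Fin m → EE k) (hD : ∀ j, D j ∈ boxQ k 0 1) (ρ : ℝ) :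
    ∫ x, (if ∃ j, F j ∧ dist x (D j) ≤ ρ then (1 : ℝ) else 0) ∂(unifCube k) =
      ∫ w in Metric.closedBall 0 ρ, evN F D w := by
  have hEm : ∀ j, MeasurableSet {w | Ev F D j w} := fun j =>
    Ev_meas (F := fun _ => F) (D := fun _ => D) (w := id) (fun _ => measurable_const)
      measurable_const measurable_id j
  have hI : ∀ j, Integrable (fun w : EE k => if Ev F D j w ∧ w ∈ Metric.closedBall 0 ρ then (1 : ℝ) else 0) := by
    intro j
    have : (fun w : EE k => if Ev F D j w ∧ w ∈ Metric.closedBall 0 ρ then (1 : ℝ) else 0) =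
        Set.indicator ({w | Ev F D j w} ∩ Metric.closedBall 0 ρ) (fun _ => 1) := by
      ext w; simp [Set.indicator]
    rw [this, integrable_indicator_iff ((hEm j).inter measurableSet_closedBall)]
    exact integrableOn_const ((measure_mono Set.inter_subset_right).trans_lt measure_closedBall_lt_top).ne
  rw [unifCube_eq, ← integral_indicator (boxQ_meas 0 1), ← integral_indicator measurableSet_closedBall]
  calc _ = ∫ x, ∑ j, if Ev F D j (x - D j) ∧ x - D j ∈ Metric.closedBall 0 ρ then (1 : ℝ) else 0 := by
        congr 1
        ext x
        rw [← Ev_point F D hD ρ x, Set.indicator]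
        by_cases hx : x ∈ boxQ k 0 1 <;> simp [hx]
    _ = ∑ j, ∫ x, if Ev F D j x ∧ x ∈ Metric.closedBall 0 ρ then (1 : ℝ) else 0 := by
        rw [integral_finsetSum]
        · refine Finset.sum_congr rfl fun j _ => ?_
          exact integral_sub_right_eq_self (fun w : EE k => if Ev F D j w ∧ w ∈ Metric.closedBall 0 ρ then (1 : ℝ) else 0) (D j)
        · intro j _
          exact (hI j).comp_sub_right (D j)
    _ = _ := by
        rw [← integral_finsetSum _ fun j _ => hI j]
        congr 1
        ext x
        unfold evN Set.indicator
        by_cases hx : x ∈ Metric.closedBall (0 : EE k) ρ <;> simp only [hx, and_true, and_false, if_true, if_false, Finset.sum_const_zero]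

end vor

section upd

variable {k : ℕ}

lemma adj_update {n a m : ℕ} (S : Fin a → EE k) (r : Fin a → ℝ) (D : Fin m → EE k) (i : Fin a)
    (s : EE k) (c : ℝ) :
    adjOf k n (Function.update S i s) (Function.update r i c) D =
      Function.update (adjOf k n S r D) i (fun j => dist s (D j) ≤ (c / n) ^ ((1 : ℝ) / k)) := by
  funext i' j
  by_cases h : i' = i
  · subst h; simp [adjOf]
  · simp [adjOf, h]

lemma int_update {a : ℕ} (i : Fin a) {f : (Fin a → EE k) → ℝ} (hf : Integrable f (PU k a)) :
    ∫ S, f S ∂(PU k a) = ∫ S, ∫ x, f (Function.update S i x) ∂(unifCube k) ∂(PU k a) := by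
  have h := mp_update (k := k) a i
  rw [← integral_prod (fun q : (Fin a → EE k) × EE k => f (Function.update q.1 i q.2))]
  · conv_lhs => rw [← h.map_eq]
    rw [integral_map h.measurable.aemeasurable]
    rw [h.map_eq]; exact hf.aestronglyMeasurable
  · exact h.integrable_comp_of_integrable hf

/-- density function -/
def qF (k n m : ℕ) {a : ℕ} (r : Fin a → ℝ) (i : Fin a) (w : EE k) : ℝ :=
  ∫ p, evN (freeN (adjOf k n p.1 r p.2) i) p.2 w ∂(PP k a m)

def A0F (k n m : ℕ) {a : ℕ} (r : Fin a → ℝ) (i : Fin a) : ℝ :=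
  ∫ p, (matchingNumber (Function.update (adjOf k n p.1 r p.2) i (fun _ => False)) : ℝ) ∂(PP k a m)

lemma evN_joint (n m : ℕ) {a : ℕ} (r : Fin a → ℝ) (i : Fin a) :
    Measurable fun z : ((Fin a → EE k) × (Fin m → EE k)) × EE k =>
      evN (freeN (adjOf k n z.1.1 r z.1.2) i) z.1.2 z.2 := by
  apply evN_meas
  · intro j
    exact (meas_adj_comp n a m r (fun A => freeN A i j)).comp measurable_fst
  · fun_prop
  · fun_prop

lemma evN_abs {m : ℕ} (F : Fin m → Prop) (D : Fin m → EE k) (w : EE k) : ‖evN F D w‖ ≤ m := by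
  rw [Real.norm_of_nonneg (evN_nonneg _ _ _)]; exact evN_le _ _ _

lemma qF_meas (n m : ℕ) {a : ℕ} (r : Fin a → ℝ) (i : Fin a) : Measurable (qF k n m r i) := by
  have := (evN_joint (k := k) n m r i).stronglyMeasurable
  exact (this.integral_prod_left' (μ := PP k a m)).measurable

lemma evN_p_int (n m : ℕ) {a : ℕ} (r : Fin a → ℝ) (i : Fin a) (w : EE k) :
    Integrable (fun p => evN (freeN (adjOf k n p.1 r p.2) i) p.2 w) (PP k a m) :=
  Integrable.of_bound ((evN_joint n m r i).comp
    (measurable_id.prodMk measurable_const)).aestronglyMeasurable m (.of_forall fun p => evN_abs _ _ _)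

lemma qF_nonneg (n m : ℕ) {a : ℕ} (r : Fin a → ℝ) (i : Fin a) (w : EE k) : 0 ≤ qF k n m r i w :=
  integral_nonneg fun p => evN_nonneg _ _ _

lemma qF_le (n m : ℕ) {a : ℕ} (r : Fin a → ℝ) (i : Fin a) (w : EE k) : qF k n m r i w ≤ m := by
  calc qF k n m r i w ≤ ∫ _p, (m : ℝ) ∂(PP k a m) :=
        integral_mono (evN_p_int n m r i w) (integrable_const _) fun p => evN_le _ _ _
    _ = m := by simp

lemma upd_meas_aux (m : ℕ) {a : ℕ} (i : Fin a) (S : Fin a → EE k) :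
    Measurable (fun z : EE k × (Fin m → EE k) => (Function.update S i z.1, z.2)) := by
  refine Measurable.prodMk ?_ measurable_snd
  refine measurable_pi_lambda _ fun j => ?_
  by_cases h : j = i
  · subst h; simp only [Function.update_self]; fun_prop
  · simp only [Function.update_of_ne h]; fun_prop

lemma hmm_aux (n m : ℕ) {a : ℕ} (r : Fin a → ℝ) (i : Fin a) (S : Fin a → EE k) :
    Measurable (fun z : EE k × (Fin m → EE k) =>
      (matchingNumber (adjOf k n (Function.update S i z.1) r z.2) : ℝ)) := by
  have h1 := meas_adj_comp (k := k) n a m r fun x => (matchingNumber x : ℝ)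
  have h2 := upd_meas_aux (k := k) m i S
  have h3 := h1.comp h2
  exact h3

lemma muU_update (n m : ℕ) {a : ℕ} (r : Fin a → ℝ) (i : Fin a) (c : ℝ) :
    muU k n m (Function.update r i c) = A0F k n m r i +
      ∫ w in Metric.closedBall 0 ((c / n) ^ ((1 : ℝ) / k)), qF k n m r i w := by
  set ρ := (c / n) ^ ((1 : ℝ) / k) with hρ
  have hfin : IsFiniteMeasure ((volume : Measure (EE k)).restrict (Metric.closedBall 0 ρ)) :=
    ⟨by simpa using measure_closedBall_lt_top⟩
  have hI0 : Integrable (fun p : (Fin a → EE k) × (Fin m → EE k) =>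
      (matchingNumber (Function.update (adjOf k n p.1 r p.2) i (fun _ => False)) : ℝ)) (PP k a m) :=
    adj_comp_integrable n a m r fun A => (matchingNumber (Function.update A i (fun _ => False)) : ℝ)
  have hJ : Integrable (fun z : ((Fin a → EE k) × (Fin m → EE k)) × EE k =>
      evN (freeN (adjOf k n z.1.1 r z.1.2) i) z.1.2 z.2)
      ((PP k a m).prod (volume.restrict (Metric.closedBall 0 ρ))) :=
    Integrable.of_bound (evN_joint n m r i).aestronglyMeasurable m (.of_forall fun p => evN_abs _ _ _)
  have hmn := adj_comp_integrable (k := k) n a m (Function.update r i c) fun x => (matchingNumber x : ℝ)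
  have hmm := fun S : Fin a → EE k => hmm_aux (k := k) n m (Function.update r i c) i S
  calc muU k n m (Function.update r i c)
      = ∫ S, ∫ x, ∫ D, (matchingNumber (adjOf k n (Function.update S i x) (Function.update r i c) D) : ℝ)
          ∂(PU k m) ∂(unifCube k) ∂(PU k a) := by
        rw [muU_eq, integral_prod _ hmn]
        exact int_update i hmn.integral_prod_left
    _ = ∫ S, ∫ D, ((matchingNumber (Function.update (adjOf k n S r D) i (fun _ => False)) : ℝ) +
          ∫ w in Metric.closedBall 0 ρ, evN (freeN (adjOf k n S r D) i) D w) ∂(PU k m) ∂(PU k a) := by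
        refine integral_congr_ae (.of_forall fun S => ?_)
        dsimp only
        rw [integral_integral_swap]
        · refine integral_congr_ae ?_
          filter_upwards [PU_ae m] with D hD
          rw [← vor_int _ _ hD]
          have : ∀ x : EE k, (matchingNumber (adjOf k n (Function.update S i x) (Function.update r i c) D) : ℝ)
            = (matchingNumber (Function.update (adjOf k n S r D) i (fun _ => False)) : ℝ) +
              if ∃ j, freeN (adjOf k n S r D) i j ∧ dist x (D j) ≤ ρ then (1 : ℝ) else 0 := by
            intro x
            rw [adj_update, mn_update]
            push_cast
            rfl
          simp_rw [this]
          rw [integral_add (integrable_const _)]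
          · simp
          · refine Integrable.of_bound (Measurable.aestronglyMeasurable ?_) 1 (.of_forall fun x => ?_)
            · refine Measurable.ite ?_ measurable_const measurable_const
              have : {x : EE k | ∃ j, freeN (adjOf k n S r D) i j ∧ dist x (D j) ≤ ρ} =
                  ⋃ j, {x | freeN (adjOf k n S r D) i j ∧ dist x (D j) ≤ ρ} := by ext; simp
              rw [this]
              refine MeasurableSet.iUnion fun j => MeasurableSet.inter (MeasurableSet.const _) ?_
              exact measurableSet_le (f := fun x : EE k => dist x (D j)) (g := fun _ => ρ)
                (by fun_prop) (by fun_prop)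
            · split_ifs <;> simp
        · refine Integrable.of_bound (hmm S).aestronglyMeasurable (a * m : ℕ) (.of_forall fun z => ?_)
          simp only [Function.uncurry]
          rw [Real.norm_of_nonneg (by positivity)]
          exact_mod_cast mn_le _
    _ = ∫ p, ((matchingNumber (Function.update (adjOf k n p.1 r p.2) i (fun _ => False)) : ℝ) +
          ∫ w in Metric.closedBall 0 ρ, evN (freeN (adjOf k n p.1 r p.2) i) p.2 w) ∂(PP k a m) :=
        (integral_prod _ (hI0.add hJ.integral_prod_left)).symm
    _ = _ := by
        rw [integral_add hI0 hJ.integral_prod_left]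
        congr 1
        exact integral_integral_swap hJ

end upd

section det

variable {k : ℕ}

lemma coord_le_norm (x : EE k) (i : Fin k) : |x i| ≤ ‖x‖ := by
  have := PiLp.norm_apply_le x i
  simpa using this

lemma boxQ_add {x w : EE k} {a b e : ℝ} (hx : x ∈ boxQ k a b) (hw : ‖w‖ ≤ e) :
    x + w ∈ boxQ k (a - e) (b + e) := by
  intro i
  have h1 := abs_le.1 ((coord_le_norm w i).trans hw)
  have h2 := hx i
  simp only [PiLp.add_apply, Set.mem_Icc] at *
  constructor <;> linarith

lemma boxQ_mono {a b a' b' : ℝ} (h1 : a' ≤ a) (h2 : b ≤ b') : boxQ k a b ⊆ boxQ k a' b' :=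
  fun _ hx i => ⟨h1.trans (hx i).1, (hx i).2.trans h2⟩

lemma Ev_star {m : ℕ} {F : Fin m → Prop} {D : Fin m → EE k} {j : Fin m} {u : EE k} (hu : ‖u‖ = 1)
    {s t : ℝ} (hs : 0 ≤ s) (hst : s ≤ t) (h : Ev F D j (t • u)) : Ev F D j (s • u) := by
  obtain ⟨h1, h2, h3, h4⟩ := h
  have hns : ‖s • u‖ = s := by rw [norm_smul, hu, mul_one, Real.norm_of_nonneg hs]
  have hnt : ‖t • u‖ = t := by rw [norm_smul, hu, mul_one, Real.norm_of_nonneg (hs.trans hst)]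
  have hdist : ∀ y, dist (D j + t • u) y ≤ (t - s) + dist (D j + s • u) y := by
    intro y
    have h5 := dist_triangle (D j + t • u) (D j + s • u) y
    have h6 : dist (D j + t • u) (D j + s • u) = t - s := by
      rw [dist_add_left, dist_eq_norm, ← sub_smul, norm_smul, hu, mul_one,
        Real.norm_of_nonneg (by linarith)]
    linarith
  refine ⟨h1, h2, fun i => ?_, fun j' hj' => ?_⟩
  · have h5 := h2 i
    have h6 := h3 i
    simp only [PiLp.add_apply, PiLp.smul_apply, smul_eq_mul, Set.mem_Icc] at *
    rcases le_total 0 (u i) with h | h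
    · have := mul_le_mul_of_nonneg_right hst h
      have := mul_nonneg hs h
      constructor <;> linarith
    · have := mul_le_mul_of_nonpos_right hst h
      have := mul_nonpos_of_nonneg_of_nonpos hs h
      constructor <;> linarith
  · have h5 := h4 j' hj'
    rw [hnt] at h5
    rw [hns]
    have h6 := hdist (D j')
    exact ⟨fun h => by linarith [h5.1 h], fun h => by linarith [h5.2 h]⟩

def lens (x u : EE k) (s t : ℝ) : Set (EE k) :=
  Metric.ball (x + t • u) t \ Metric.closedBall (x + s • u) s

/-- good event -/
def Hev {a m : ℕ} (i : Fin a) (j j' : Fin m) (u : EE k) (s t R : ℝ)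
    (p : (Fin a → EE k) × (Fin m → EE k)) : Prop :=
  p.2 j ∈ boxQ k (1/4) (3/4) ∧ p.2 j' ∈ lens (p.2 j) u s t ∧
  (∀ j'', j'' ≠ j → j'' ≠ j' → p.2 j'' ∈ (Metric.closedBall (p.2 j) (3 * R))ᶜ) ∧
  ∀ i', i' ≠ i → p.1 i' ∈ (Metric.closedBall (p.2 j) (3 * R))ᶜ

lemma lens_dist {x u y : EE k} (hu : ‖u‖ = 1) {s t : ℝ} (ht : 0 ≤ t) (h : y ∈ lens x u s t) :
    dist y x < 2 * t := by
  have h1 := Metric.mem_ball.1 h.1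
  have h2 := dist_triangle y (x + t • u) x
  have h3 : dist (x + t • u) x = t := by
    rw [dist_eq_norm, add_sub_cancel_left, norm_smul, hu, mul_one, Real.norm_of_nonneg ht]
  linarith

lemma Hev_unique {a m : ℕ} {i : Fin a} {j j1 j2 : Fin m} {u : EE k} (hu : ‖u‖ = 1) {s t R : ℝ}
    {p : (Fin a → EE k) × (Fin m → EE k)} (ht : 0 ≤ t) (htR : t ≤ R) (hj : j2 ≠ j)
    (h1 : Hev i j j1 u s t R p) (h2 : Hev i j j2 u s t R p) : j1 = j2 := by
  by_contra hne
  have h3 := h1.2.2.1 j2 hj (Ne.symm hne)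
  have h4 := lens_dist hu ht h2.2.1
  apply h3
  rw [Metric.mem_closedBall]
  linarith

lemma Hev_Ev {n a m : ℕ} {r : Fin a → ℝ} {i : Fin a} {j j' : Fin m} {u : EE k} (hu : ‖u‖ = 1)
    {s t R : ℝ} {p : (Fin a → EE k) × (Fin m → EE k)} (hs : 0 ≤ s) (hst : s ≤ t) (htR : t ≤ R)
    (hR : 3 * R ≤ 1 / 4) (hr : ∀ i', (r i' / n) ^ ((1 : ℝ) / k) ≤ R) (hj : j' ≠ j)
    (h : Hev i j j' u s t R p) :
    Ev (freeN (adjOf k n p.1 r p.2) i) p.2 j (s • u) ∧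
      ¬ Ev (freeN (adjOf k n p.1 r p.2) i) p.2 j (t • u) := by
  obtain ⟨h1, h2, h3, h4⟩ := h
  have ht := hs.trans hst
  have hd := lens_dist hu ht h2
  have hns : ‖s • u‖ = s := by rw [norm_smul, hu, mul_one, Real.norm_of_nonneg hs]
  have hnt : ‖t • u‖ = t := by rw [norm_smul, hu, mul_one, Real.norm_of_nonneg ht]
  have hF : freeN (adjOf k n p.1 r p.2) i j := by
    apply freeN_of_isolated
    intro i' hi' hadj
    apply h4 i' hi'
    rw [Metric.mem_closedBall]
    exact (hadj.trans (hr i')).trans (by linarith)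
  have hF' : freeN (adjOf k n p.1 r p.2) i j' := by
    apply freeN_of_isolated
    intro i' hi' hadj
    apply h4 i' hi'
    rw [Metric.mem_closedBall]
    have := hadj.trans (hr i')
    have := dist_triangle (p.1 i') (p.2 j') (p.2 j)
    linarith
  constructor
  · refine ⟨hF, boxQ_mono (by norm_num) (by norm_num) h1,
      boxQ_mono (by linarith) (by linarith) (boxQ_add h1 hns.le), fun j'' hj'' => ?_⟩
    rw [hns]
    suffices j'' ≠ j → s < dist (p.2 j + s • u) (p.2 j'') from
      ⟨fun h => this h.ne, fun h => (this h.ne').le⟩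
    intro hne
    by_cases he : j'' = j'
    · subst he
      have := h2.2
      rw [Metric.mem_closedBall, not_le, dist_comm] at this
      exact this
    · have h5 := h3 j'' hne he
      rw [Set.mem_compl_iff, Metric.mem_closedBall, not_le] at h5
      have h6 := dist_triangle (p.2 j'') (p.2 j + s • u) (p.2 j)
      have h7 : dist (p.2 j + s • u) (p.2 j) = s := by
        rw [dist_eq_norm, add_sub_cancel_left, hns]
      rw [dist_comm (p.2 j'') (p.2 j + s • u)] at h6
      linarith
  · intro hE
    have h5 := hE.2.2.2 j' hF'
    rw [hnt] at h5
    have h6 := Metric.mem_ball.1 h2.1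
    rw [dist_comm] at h6
    rcases lt_or_gt_of_ne hj with h | h
    · linarith [h5.1 h]
    · linarith [h5.2 h]

lemma evN_diff {n a m : ℕ} {r : Fin a → ℝ} {i : Fin a} {u : EE k} (hu : ‖u‖ = 1)
    {s t R : ℝ} {p : (Fin a → EE k) × (Fin m → EE k)} (hs : 0 ≤ s) (hst : s ≤ t) (htR : t ≤ R)
    (hR : 3 * R ≤ 1 / 4) (hr : ∀ i', (r i' / n) ^ ((1 : ℝ) / k) ≤ R) :
    evN (freeN (adjOf k n p.1 r p.2) i) p.2 (t • u) +
      (∑ j, ∑ j' ∈ Finset.univ.erase j, if Hev i j j' u s t R p then (1 : ℝ) else 0) ≤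
    evN (freeN (adjOf k n p.1 r p.2) i) p.2 (s • u) := by
  unfold evN
  rw [← Finset.sum_add_distrib]
  apply Finset.sum_le_sum
  intro j _
  by_cases hex : ∃ j' ∈ Finset.univ.erase j, Hev i j j' u s t R p
  · obtain ⟨j', hj', hH⟩ := hex
    have hne : j' ≠ j := Finset.ne_of_mem_erase hj'
    obtain ⟨e1, e2⟩ := Hev_Ev (n := n) (r := r) hu hs hst htR hR hr hne hH
    rw [if_pos e1, if_neg e2, Finset.sum_eq_single j', if_pos hH]
    · norm_num
    · intro b hb hbj
      rw [if_neg]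
      intro hH2
      exact hbj (Hev_unique hu (hs.trans hst) htR hne hH2 hH)
    · intro h; exact absurd hj' h
  · rw [Finset.sum_eq_zero, add_zero]
    · by_cases h : Ev (freeN (adjOf k n p.1 r p.2) i) p.2 j (t • u)
      · rw [if_pos h, if_pos (Ev_star hu hs hst h)]
      · rw [if_neg h]; split_ifs <;> norm_num
    · intro j' hj'
      rw [if_neg]
      intro hH; exact hex ⟨j', hj', hH⟩

end det

section pr2

variable {k : ℕ}

lemma Hev_meas {a m : ℕ} (i : Fin a) (j j' : Fin m) (u : EE k) (s t R : ℝ) :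
    MeasurableSet {p : (Fin a → EE k) × (Fin m → EE k) | Hev i j j' u s t R p} := by
  have hD : ∀ j, Measurable fun p : (Fin a → EE k) × (Fin m → EE k) => p.2 j := fun j => by fun_prop
  have hS : ∀ i, Measurable fun p : (Fin a → EE k) × (Fin m → EE k) => p.1 i := fun j => by fun_prop
  unfold Hev
  refine MeasurableSet.inter (hD j (boxQ_meas _ _)) (MeasurableSet.inter ?_ (MeasurableSet.inter ?_ ?_))
  · refine MeasurableSet.inter (measurableSet_lt ((hD j').dist ((hD j).add_const _)) measurable_const)
      (MeasurableSet.compl (measurableSet_le ((hD j').dist ((hD j).add_const _)) measurable_const))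
  · have : {p : (Fin a → EE k) × (Fin m → EE k) | ∀ j'', j'' ≠ j → j'' ≠ j' →
        p.2 j'' ∈ (Metric.closedBall (p.2 j) (3 * R))ᶜ} = ⋂ j'', {p | j'' ≠ j → j'' ≠ j' →
        p.2 j'' ∈ (Metric.closedBall (p.2 j) (3 * R))ᶜ} := by
      ext x; simp only [Set.mem_iInter, Set.mem_ofPred_eq]
    change MeasurableSet {p | _}
    rw [this]
    refine MeasurableSet.iInter fun j'' => MeasurableSet.imp (MeasurableSet.const _)
      (MeasurableSet.imp (MeasurableSet.const _) (MeasurableSet.compl ?_))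
    exact measurableSet_le ((hD j'').dist (hD j)) measurable_const
  · have : {p : (Fin a → EE k) × (Fin m → EE k) | ∀ i', i' ≠ i →
        p.1 i' ∈ (Metric.closedBall (p.2 j) (3 * R))ᶜ} = ⋂ i', {p | i' ≠ i →
        p.1 i' ∈ (Metric.closedBall (p.2 j) (3 * R))ᶜ} := by
      ext x; simp only [Set.mem_iInter, Set.mem_ofPred_eq]
    change MeasurableSet {p | _}
    rw [this]
    refine MeasurableSet.iInter fun i' => MeasurableSet.imp (MeasurableSet.const _)
      (MeasurableSet.compl ?_)
    exact measurableSet_le ((hS i').dist (hD j)) measurable_const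

lemma U_compl (x : EE k) {ρ : ℝ} (hρ : 0 ≤ ρ) :
    ENNReal.ofReal (1 - ρ ^ k * omg k) ≤ unifCube k (Metric.closedBall x ρ)ᶜ := by
  rw [prob_compl_eq_one_sub measurableSet_closedBall, ENNReal.ofReal_sub _ (by have := omg_pos (k := k); positivity),
    ENNReal.ofReal_one]
  apply tsub_le_tsub_left
  rw [unifCube_eq, ← vol_closedBall x hρ, Measure.real, ENNReal.ofReal_toReal measure_closedBall_lt_top.ne]
  exact Measure.restrict_apply_le _ _

lemma U_box : unifCube k (boxQ k (1/4) (3/4)) = ENNReal.ofReal (1/2) ^ k := by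
  rw [unifCube_eq, Measure.restrict_apply (boxQ_meas _ _),
    Set.inter_eq_left.2 (boxQ_mono (by norm_num) (by norm_num)), boxQ_vol]
  norm_num

lemma U_lens (hk : 2 ≤ k) {x u : EE k} (hu : ‖u‖ = 1) {s t : ℝ} (hs : 0 ≤ s) (hst : s ≤ t)
    (ht4 : 2 * t ≤ 1 / 4) (hx : x ∈ boxQ k (1/4) (3/4)) :
    ENNReal.ofReal ((t ^ k - s ^ k) * omg k) ≤ unifCube k (lens x u s t) := by
  have ht := hs.trans hst
  have hsub : lens x u s t ⊆ boxQ k 0 1 := by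
    intro y hy
    have h1 := lens_dist hu ht hy
    have : y = x + (y - x) := by abel
    rw [this]
    exact boxQ_mono (by linarith) (by linarith) (boxQ_add hx (by rw [← dist_eq_norm]; exact h1.le.trans ht4))
  have hml : MeasurableSet (lens x u s t) := measurableSet_ball.diff measurableSet_closedBall
  rw [unifCube_eq, Measure.restrict_apply hml,
    Set.inter_eq_left.2 hsub]
  refine le_trans ?_ le_measure_sdiff
  rw [sub_mul, ENNReal.ofReal_sub _ (by have := omg_pos (k := k); positivity),
    ← vol_closedBall (x + s • u) hs, ← vol_ball hk (x + t • u) ht, Measure.real, Measure.real,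
    ENNReal.ofReal_toReal measure_closedBall_lt_top.ne, ENNReal.ofReal_toReal measure_ball_lt_top.ne]

lemma mp_update2 (a m : ℕ) (j : Fin m) :
    MeasurePreserving (fun q : ((Fin a → EE k) × (Fin m → EE k)) × EE k =>
      (q.1.1, Function.update q.1.2 j q.2)) ((PP k a m).prod (unifCube k)) (PP k a m) := by
  have h1 := (MeasurePreserving.id (PU k a)).prod (mp_update (k := k) m j)
  exact h1.comp (measurePreserving_prodAssoc (PU k a) (PU k m) (unifCube k))

lemma Hev_slice (hk : 2 ≤ k) {a m : ℕ} (i : Fin a) {j j' : Fin m} (hj : j' ≠ j) {u : EE k} (hu : ‖u‖ = 1)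
    {s t R : ℝ} (hs : 0 ≤ s) (hst : s ≤ t) (htR : t ≤ R) (hR : 3 * R ≤ 1 / 4)
    {x : EE k} (hx : x ∈ boxQ k (1/4) (3/4)) :
    ENNReal.ofReal (1 - (3 * R) ^ k * omg k) ^ a * (ENNReal.ofReal ((t ^ k - s ^ k) * omg k) *
      ENNReal.ofReal (1 - (3 * R) ^ k * omg k) ^ m) ≤
    PP k a m {p | Hev i j j' u s t R (p.1, Function.update p.2 j x)} := by
  set δ := ENNReal.ofReal (1 - (3 * R) ^ k * omg k) with hδ
  have hR0 : 0 ≤ 3 * R := by linarith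
  have hδ1 : δ ≤ 1 := by
    rw [hδ, ENNReal.ofReal_le_one]
    have := omg_pos (k := k)
    have : 0 ≤ (3 * R) ^ k * omg k := by positivity
    linarith
  have hδc : δ ≤ unifCube k (Metric.closedBall x (3 * R))ᶜ := U_compl x hR0
  let sS : Fin a → Set (EE k) := fun i' => if i' = i then Set.univ else (Metric.closedBall x (3 * R))ᶜ
  let sD : Fin m → Set (EE k) := fun j'' => if j'' = j then Set.univ else
    if j'' = j' then lens x u s t else (Metric.closedBall x (3 * R))ᶜ
  have hsub : (Set.univ.pi sS) ×ˢ (Set.univ.pi sD) ⊆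
      {p | Hev i j j' u s t R (p.1, Function.update p.2 j x)} := by
    rintro ⟨S, D⟩ ⟨h1, h2⟩
    simp only [Set.mem_pi, Set.mem_univ, true_imp_iff] at h1 h2
    refine ⟨by simpa using hx, ?_, fun j'' hne hne' => ?_, fun i' hi' => ?_⟩
    · have := h2 j'
      simp only [sD, if_neg hj, if_true] at this
      simpa [Function.update_of_ne hj] using this
    · have := h2 j''
      simp only [sD, if_neg hne, if_neg hne'] at this
      simpa only [Function.update_of_ne hne, Function.update_self] using this
    · have := h1 i'
      simp only [sS, if_neg hi'] at this
      simpa only [Function.update_self] using this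
  refine le_trans ?_ (measure_mono hsub)
  rw [Measure.prod_prod, Measure.pi_pi, Measure.pi_pi]
  apply mul_le_mul'
  · calc δ ^ a = ∏ _i' : Fin a, δ := by simp
      _ ≤ _ := by
        apply Finset.prod_le_prod (fun _ _ => zero_le) 
        intro i' _
        simp only [sS]
        split_ifs
        · rwa [measure_univ]
        · exact hδc
  · rw [← Finset.mul_prod_erase Finset.univ _ (Finset.mem_univ j')]
    apply mul_le_mul'
    · simp only [sD, if_neg hj, if_true]
      exact U_lens hk hu hs hst (by linarith) hx
    · calc δ ^ m ≤ δ ^ (Finset.univ.erase j').card :=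
            pow_le_pow_of_le_one zero_le hδ1 (by
              calc (Finset.univ.erase j').card ≤ (Finset.univ : Finset (Fin m)).card :=
                    Finset.card_le_card (Finset.erase_subset _ _)
                _ = m := by simp)
        _ = ∏ _j'' ∈ Finset.univ.erase j', δ := by rw [Finset.prod_const]
        _ ≤ _ := by
          apply Finset.prod_le_prod (fun _ _ => zero_le) 
          intro j'' hj''
          simp only [sD, if_neg (Finset.ne_of_mem_erase hj'')]
          split_ifs
          · rwa [measure_univ]
          · exact hδc

lemma Hev_prob (hk : 2 ≤ k) {a m : ℕ} (i : Fin a) {j j' : Fin m} (hj : j' ≠ j) {u : EE k} (hu : ‖u‖ = 1)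
    {s t R : ℝ} (hs : 0 ≤ s) (hst : s ≤ t) (htR : t ≤ R) (hR : 3 * R ≤ 1 / 4)
    (hδ : (3 * R) ^ k * omg k ≤ 1) :
    (1 - (3 * R) ^ k * omg k) ^ a * (((t ^ k - s ^ k) * omg k) *
      (1 - (3 * R) ^ k * omg k) ^ m) * (1 / 2) ^ k ≤
    (PP k a m).real {p | Hev i j j' u s t R p} := by
  have hO := omg_pos (k := k)
  have h4 : s ^ k ≤ t ^ k := pow_le_pow_left₀ hs hst k
  have hV : 0 ≤ (t ^ k - s ^ k) * omg k := mul_nonneg (by linarith) hO.le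
  have hd : 0 ≤ 1 - (3 * R) ^ k * omg k := by linarith
  rw [Measure.real, ← ENNReal.ofReal_le_iff_le_toReal (measure_ne_top _ _)]
  rw [← (mp_update2 a m j).measure_preimage (Hev_meas i j j' u s t R).nullMeasurableSet,
    Measure.prod_apply_symm ((mp_update2 a m j).measurable (Hev_meas i j j' u s t R))]
  rw [ENNReal.ofReal_mul (by positivity), ENNReal.ofReal_mul (by positivity), ENNReal.ofReal_mul hV,
    ENNReal.ofReal_pow hd, ENNReal.ofReal_pow hd, ENNReal.ofReal_pow (by norm_num), ← U_box,
    ← setLIntegral_const]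
  refine le_trans ?_ (setLIntegral_le_lintegral (boxQ k (1/4) (3/4)) _)
  apply setLIntegral_mono' (boxQ_meas _ _)
  intro x hx
  exact Hev_slice hk i hj hu hs hst htR hR hx

end pr2

section fin

variable {k : ℕ}

lemma qF_decay (hk : 2 ≤ k) {n a m : ℕ} {r : Fin a → ℝ} (i : Fin a) {u : EE k} (hu : ‖u‖ = 1)
    {s t R : ℝ} (hs : 0 ≤ s) (hst : s ≤ t) (htR : t ≤ R) (hR : 3 * R ≤ 1 / 4)
    (hr : ∀ i', (r i' / n) ^ ((1 : ℝ) / k) ≤ R)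
    (hδ : (3 * R) ^ k * omg k ≤ 1) :
    qF k n m r i (t • u) + m * (((m - 1 : ℕ) : ℝ) * ((1 - (3 * R) ^ k * omg k) ^ a *
      (((t ^ k - s ^ k) * omg k) * (1 - (3 * R) ^ k * omg k) ^ m) * (1 / 2) ^ k)) ≤
      qF k n m r i (s • u) := by
  set L := (1 - (3 * R) ^ k * omg k) ^ a *
      (((t ^ k - s ^ k) * omg k) * (1 - (3 * R) ^ k * omg k) ^ m) * (1 / 2) ^ k with hL
  have hHi : ∀ j j' : Fin m, Integrable (fun p => if Hev i j j' u s t R p then (1 : ℝ) else 0)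
      (PP k a m) := by
    intro j j'
    refine Integrable.of_bound (Measurable.ite (Hev_meas i j j' u s t R) measurable_const
      measurable_const).aestronglyMeasurable 1 (.of_forall fun x => ?_)
    split_ifs <;> simp
  have hHv : ∀ j j' : Fin m, ∫ p, (if Hev i j j' u s t R p then (1 : ℝ) else 0) ∂(PP k a m) =
      (PP k a m).real {p | Hev i j j' u s t R p} := by
    intro j j'
    rw [← integral_indicator_one (Hev_meas i j j' u s t R)]
    refine integral_congr_ae (.of_forall fun p => ?_)
    simp [Set.indicator]
  have hsum : Integrable (fun p => ∑ j, ∑ j' ∈ Finset.univ.erase j,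
      if Hev i j j' u s t R p then (1 : ℝ) else 0) (PP k a m) :=
    integrable_finset_sum _ fun j _ => integrable_finset_sum _ fun j' _ => hHi j j'
  calc _ ≤ qF k n m r i (t • u) + ∫ p, (∑ j, ∑ j' ∈ Finset.univ.erase j,
      if Hev i j j' u s t R p then (1 : ℝ) else 0) ∂(PP k a m) := by
        gcongr
        rw [integral_finsetSum _ fun j _ => integrable_finset_sum _ fun j' _ => hHi j j']
        calc (m : ℝ) * (((m - 1 : ℕ) : ℝ) * L) = ∑ j : Fin m, ∑ j' ∈ Finset.univ.erase j, L := by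
              simp [Finset.card_erase_of_mem]
          _ ≤ _ := by
              refine Finset.sum_le_sum fun j _ => ?_
              rw [integral_finsetSum _ fun j' _ => hHi j j']
              refine Finset.sum_le_sum fun j' hj' => ?_
              rw [hHv]
              exact Hev_prob hk i (Finset.ne_of_mem_erase hj') hu hs hst htR hR hδ
    _ = ∫ p, (evN (freeN (adjOf k n p.1 r p.2) i) p.2 (t • u) + ∑ j, ∑ j' ∈ Finset.univ.erase j,
      if Hev i j j' u s t R p then (1 : ℝ) else 0) ∂(PP k a m) :=
        (integral_add (evN_p_int n m r i _) hsum).symm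
    _ ≤ _ := integral_mono ((evN_p_int n m r i _).add hsum) (evN_p_int n m r i _)
        fun p => evN_diff hu hs hst htR hR hr

lemma exp_bd {x : ℝ} (h0 : 0 ≤ x) (h1 : x ≤ 1 / 2) : Real.exp (-(2 * x)) ≤ 1 - x := by
  rw [Real.exp_neg]
  have h2 := Real.add_one_le_exp (2 * x)
  have h3 : (0 : ℝ) < 2 * x + 1 := by linarith
  calc (Real.exp (2 * x))⁻¹ ≤ (2 * x + 1)⁻¹ := inv_anti₀ h3 h2
    _ ≤ 1 - x := by
      rw [inv_le_iff_one_le_mul₀ h3]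
      nlinarith

def cU (k : ℕ) (β M : ℝ) : ℝ :=
  β ^ 2 / 2 * (1 / 2) ^ k * omg k * Real.exp (-(2 * (3 ^ k * M * omg k * (1 + β))))

lemma rho_pow (hk : 2 ≤ k) {x : ℝ} (hx : 0 ≤ x) : (x ^ ((1 : ℝ) / k)) ^ k = x := by
  rw [← Real.rpow_natCast, ← Real.rpow_mul hx]
  rw [one_div, inv_mul_cancel₀ (by positivity), Real.rpow_one]

lemma decay2 (hk : 2 ≤ k) {β M : ℝ} (hβ : 0 < β) (hM : 0 < M) {n m : ℕ} (hn : 0 < n)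
    (hm : (m : ℝ) = β * n) (h1 : M * 12 ^ k ≤ n) (h2 : 2 * (3 ^ k * M * omg k) ≤ n)
    (h3 : 2 ≤ β * n) {r : Fin n → ℝ} (hr : ∀ i, r i ∈ Set.Icc 0 M) (i : Fin n)
    {u : EE k} (hu : ‖u‖ = 1) {s t : ℝ} (hs : 0 ≤ s) (hst : s ≤ t) (htR : t ≤ (M / n) ^ ((1 : ℝ) / k)) :
    qF k n m r i (t • u) + cU k β M * n ^ 2 * (t ^ k - s ^ k) ≤ qF k n m r i (s • u) := by
  have hO := omg_pos (k := k)
  have hn' : (0 : ℝ) < n := by exact_mod_cast hn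
  set R := (M / n) ^ ((1 : ℝ) / k) with hRdef
  have hMn : 0 ≤ M / n := by positivity
  have hR0 : 0 ≤ R := by positivity
  have hRk : R ^ k = M / n := rho_pow hk hMn
  have hR : 3 * R ≤ 1 / 4 := by
    have : R ≤ 1 / 12 := by
      apply le_of_pow_le_pow_left₀ (n := k) (by omega) (by norm_num)
      rw [hRk, div_pow, one_pow, div_le_div_iff₀ hn' (by positivity)]
      linarith
    linarith
  have hδe : (3 * R) ^ k * omg k = 3 ^ k * M * omg k / n := by
    rw [mul_pow, hRk]; ring
  set δ := (3 * R) ^ k * omg k with hδdef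
  have hδ0 : 0 ≤ δ := by positivity
  have hδ2 : δ ≤ 1 / 2 := by
    rw [hδe, div_le_iff₀ hn']; linarith
  have hrR : ∀ i', (r i' / n) ^ ((1 : ℝ) / k) ≤ R := by
    intro i'
    apply Real.rpow_le_rpow (div_nonneg (hr i').1 hn'.le) _ (by positivity)
    exact div_le_div_of_nonneg_right (hr i').2 hn'.le
  have hdec := qF_decay (n := n) (m := m) (r := r) hk i hu hs hst htR hR hrR (by linarith)
  refine le_trans ?_ hdec
  rw [← hδdef]
  have hV : 0 ≤ (t ^ k - s ^ k) * omg k :=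
    mul_nonneg (by linarith [pow_le_pow_left₀ hs hst k]) hO.le
  have hE : Real.exp (-(2 * (3 ^ k * M * omg k * (1 + β)))) ≤ (1 - δ) ^ n * (1 - δ) ^ m := by
    rw [← pow_add]
    calc _ = Real.exp (-(2 * δ)) ^ (n + m) := by
          rw [← Real.exp_nat_mul]
          congr 1
          push_cast
          rw [hm, hδe]
          field_simp
      _ ≤ _ := pow_le_pow_left₀ (Real.exp_pos _).le (exp_bd hδ0 hδ2) _
  have hmm : β ^ 2 / 2 * n ^ 2 ≤ m * ((m - 1 : ℕ) : ℝ) := by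
    have hm1 : 1 ≤ m := by
      have : (1 : ℝ) ≤ m := by linarith
      exact_mod_cast this
    rw [Nat.cast_sub hm1, hm, Nat.cast_one]
    nlinarith
  have key : cU k β M * n ^ 2 * (t ^ k - s ^ k) ≤ m * (((m - 1 : ℕ) : ℝ) * ((1 - δ) ^ n *
      (((t ^ k - s ^ k) * omg k) * (1 - δ) ^ m) * (1 / 2) ^ k)) := by
    calc cU k β M * n ^ 2 * (t ^ k - s ^ k) = (β ^ 2 / 2 * n ^ 2) *
          (Real.exp (-(2 * (3 ^ k * M * omg k * (1 + β)))) * (((t ^ k - s ^ k) * omg k) * (1 / 2) ^ k)) := by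
          unfold cU; ring
      _ ≤ (m * ((m - 1 : ℕ) : ℝ)) * (((1 - δ) ^ n * (1 - δ) ^ m) * (((t ^ k - s ^ k) * omg k) * (1 / 2) ^ k)) := by
          gcongr
      _ = _ := by ring
  linarith

lemma mu_main (hk : 2 ≤ k) {β M θ : ℝ} (hβ : 0 < β) (hM : 0 < M) (hθ : 0 ≤ θ) {n m : ℕ} (hn : 0 < n)
    (hm : (m : ℝ) = β * n) (h1 : M * 12 ^ k ≤ n) (h2 : 2 * (3 ^ k * M * omg k) ≤ n)
    (h3 : 2 ≤ β * n) {r r' : Fin n → ℝ} (hr : ∀ i, r i ∈ Set.Icc 0 M) (hr' : ∀ i, r' i ∈ Set.Icc 0 M)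
    (hmaj : Majorizes r r') (hgap : θ * n ≤ ∑ i, |descSort r i - descSort r' i|) :
    (cU k β M * omg k / 4) * θ ^ 2 * n - 2 * (β * omg k * M * √n) ≤ muU k n m r' - muU k n m r := by
  have hO := omg_pos (k := k)
  have hn' : (0 : ℝ) < n := by exact_mod_cast hn
  have hc : 0 ≤ cU k β M := by unfold cU; positivity
  set ρ : ℝ → ℝ := fun a => (a / n) ^ ((1 : ℝ) / k) with hρ
  have hρk : ∀ a, 0 ≤ a → ρ a ^ k = a / n := fun a ha => rho_pow hk (by positivity)
  have hρ0 : ∀ a, 0 ≤ a → 0 ≤ ρ a := fun a ha => by simp only [hρ]; positivity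
  have hρm : ∀ a b, 0 ≤ a → a ≤ b → ρ a ≤ ρ b := by
    intro a b ha hab
    exact Real.rpow_le_rpow (by positivity) (div_le_div_of_nonneg_right hab hn'.le) (by positivity)
  have hrad : ∀ x : Fin n → ℝ, (∀ i, x i ∈ Set.Icc 0 M) → ∀ i, ∀ a b, 0 ≤ a → a ≤ b → b ≤ M →
      (muU k n m (Function.update x i b) - muU k n m (Function.update x i a) ≤
        hF (qF k n m x i) (ρ a) / n * (b - a) - (cU k β M * omg k / 4) * (b - a) ^ 2) ∧
      (hF (qF k n m x i) (ρ b) / n * (b - a) + (cU k β M * omg k / 4) * (b - a) ^ 2 ≤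
        muU k n m (Function.update x i b) - muU k n m (Function.update x i a)) ∧
      hF (qF k n m x i) (ρ b) / n ≤ hF (qF k n m x i) (ρ a) / n ∧
      0 ≤ muU k n m (Function.update x i b) - muU k n m (Function.update x i a) ∧
      muU k n m (Function.update x i b) - muU k n m (Function.update x i a) ≤
        β * omg k * (b - a) := by
    intro x hx i a b ha hab hb
    have h := radial hk (qF_meas n m x i) (B := m) (R := ρ M) (c0 := cU k β M * n ^ 2) (by positivity)
      (qF_nonneg n m x i) (qF_le n m x i)
      (fun u hu s t hs hst htR => decay2 hk hβ hM hn hm h1 h2 h3 hx i hu hs hst htR)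
      (hρ0 a ha) (hρm a b ha hab) (hρm b M (ha.trans hab) hb)
    rw [hρk a ha, hρk b (ha.trans hab)] at h
    rw [muU_update, muU_update, add_sub_add_left_eq_sub]
    obtain ⟨g1, g2, g3, g4, g5⟩ := h
    have e1 : cU k β M * n ^ 2 * (omg k / 4 * (b / n - a / n) ^ 2) =
      (cU k β M * omg k / 4) * (b - a) ^ 2 := by field_simp
    have e2 : ∀ y : ℝ, (b / n - a / n) * y = y / n * (b - a) := fun y => by field_simp
    rw [e1, e2] at g1 g2
    refine ⟨g1, g2, div_le_div_of_nonneg_right g3 hn'.le, g4, g5.trans (le_of_eq ?_)⟩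
    rw [hm]; field_simp
  refine abstract_main hM.le (by positivity) (by positivity) hθ (muU k n m)
    (fun x σ => muU_perm n n m x σ) ?_ ?_ hr hr' hmaj hgap
  · intro x hx i a ha
    have hxi : Function.update x i (x i) = x := Function.update_eq_self i x
    rcases le_total a (x i) with h | h
    · obtain ⟨-, -, -, g4, g5⟩ := hrad x hx i a (x i) ha.1 h (hx i).2
      rw [hxi] at g4 g5
      rw [abs_sub_comm, abs_of_nonneg g4, abs_sub_comm, abs_of_nonneg (by linarith)]
      exact g5
    · obtain ⟨-, -, -, g4, g5⟩ := hrad x hx i (x i) a (hx i).1 h ha.2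
      rw [hxi] at g4 g5
      rw [abs_of_nonneg g4, abs_of_nonneg (by linarith)]
      exact g5
  · intro x hx i
    refine ⟨fun a => hF (qF k n m x i) (ρ a) / n, fun a ha b hb hab =>
      (hrad x hx i a b ha.1 hab hb.2).2.2.1, fun a ha b hb => ?_⟩
    rcases le_total a b with h | h
    · have := (hrad x hx i a b ha.1 h hb.2).1
      linarith
    · have := (hrad x hx i b a hb.1 h ha.2).2.1
      dsimp only
      have e : (b - a) ^ 2 = (a - b) ^ 2 := by ring
      rw [e]
      linarith

end fin

/-- **Uniformity principle in dimension `k ≥ 2`.**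
Fix a dimension `k ≥ 2`, a demand-to-supply ratio `β > 0`, and a constant
`M ≥ max {1, 1/β}`. There exist a constant `C > 0` (depending only on `β`, `M`, `k`)
and an integer `N` such that for all `n ≥ N` with `m = βn`, and for all service-range
vectors `r, r' ∈ [0,M]^n` with `r ⪰ r'` and `‖r^↓ - r'^↓‖₁ > θ n` for some
`θ > C n^{-1/(4(k+1))}`, the expected maximum matching sizes satisfy `μ_m(r') > μ_m(r)`. -/
theorem uniformity_principle_high_dim (k : ℕ) (hk : 2 ≤ k)
    (β M : ℝ) (hβ : 0 < β) (hM : max 1 β⁻¹ ≤ M) :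
    ∃ C : ℝ, 0 < C ∧ ∃ N : ℕ, ∀ n : ℕ, N ≤ n → ∀ m : ℕ, (m : ℝ) = β * n →
      ∀ r r' : Fin n → ℝ,
        (∀ i, r i ∈ Set.Icc (0 : ℝ) M) → (∀ i, r' i ∈ Set.Icc (0 : ℝ) M) →
        Majorizes r r' →
        ∀ θ : ℝ, C * (n : ℝ) ^ (-(1 : ℝ) / (4 * ((k : ℝ) + 1))) < θ →
          θ * n < ∑ i, |descSort r i - descSort r' i| →
          muU k n m r < muU k n m r' := by
  have hO := omg_pos (k := k)
  have hM1 : 1 ≤ M := (le_max_left _ _).trans hM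
  have hM0 : 0 < M := by linarith
  set cf := cU k β M * omg k / 4 with hcf
  have hcf0 : 0 < cf := by rw [hcf]; unfold cU; positivity
  set K := 2 * (β * omg k * M) with hK
  have hK0 : 0 < K := by positivity
  refine ⟨√(K / cf), by positivity, ⌈M * 12 ^ k⌉₊ + ⌈2 * (3 ^ k * M * omg k)⌉₊ + ⌈2 / β⌉₊ + 1, ?_⟩
  intro n hn m hm r r' hr hr' hmaj θ hθ hgap
  have hn0 : 0 < n := by omega
  have hn' : (0 : ℝ) < n := by exact_mod_cast hn0
  have hn1 : (1 : ℝ) ≤ n := by exact_mod_cast hn0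
  have h1 : M * 12 ^ k ≤ n := (Nat.le_ceil _).trans (Nat.cast_le.2 (by omega))
  have h2 : 2 * (3 ^ k * M * omg k) ≤ n := (Nat.le_ceil _).trans (Nat.cast_le.2 (by omega))
  have h3 : 2 / β ≤ n := (Nat.le_ceil _).trans (Nat.cast_le.2 (by omega))
  have h3' : 2 ≤ β * n := by rw [div_le_iff₀ hβ] at h3; linarith
  set ex : ℝ := -(1 : ℝ) / (4 * ((k : ℝ) + 1)) with hex
  have hpos : 0 < (n : ℝ) ^ ex := by positivity
  have hθ0 : 0 < θ := lt_of_le_of_lt (by positivity) hθ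
  have hmain := mu_main hk hβ hM0 hθ0.le hn0 hm h1 h2 h3' hr hr' hmaj hgap.le
  have hsq : K / cf * ((n : ℝ) ^ ex) ^ 2 < θ ^ 2 := by
    have := pow_lt_pow_left₀ hθ (by positivity) (n := 2) (by norm_num)
    rwa [mul_pow, Real.sq_sqrt (by positivity)] at this
  have hsn : √(n : ℝ) ≤ ((n : ℝ) ^ ex) ^ 2 * n := by
    rw [← Real.rpow_natCast, ← Real.rpow_mul hn'.le, Real.sqrt_eq_rpow]
    nth_rewrite 3 [← Real.rpow_one (n : ℝ)]
    rw [← Real.rpow_add hn']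
    apply Real.rpow_le_rpow_of_exponent_le hn1
    rw [hex]
    have hk0 : (0 : ℝ) ≤ k := by positivity
    have : (1 : ℝ) / (4 * ((k : ℝ) + 1)) ≤ 1 / 4 := by
      apply one_div_le_one_div_of_le <;> linarith
    rw [neg_div]
    push_cast
    linarith
  have hfin : K * √(n : ℝ) < cf * θ ^ 2 * n := by
    calc K * √(n : ℝ) ≤ K * (((n : ℝ) ^ ex) ^ 2 * n) := by gcongr
      _ = cf * (K / cf * ((n : ℝ) ^ ex) ^ 2) * n := by field_simp
      _ < _ := by gcongr
  have hKe : 2 * (β * omg k * M * √(n : ℝ)) = K * √(n : ℝ) := by rw [hK]; ring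
  rw [hKe, ← hcf] at hmain
  linarith

end
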